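/- Let d ≥ 3 be an integer, u_⋆(x) = (1+|x|²)^{−(d−2)/2}, f_0 = u_⋆, f_i(x) = x_i u_⋆(x)/(1+|x|²) for i = 1,…,d, and f_{d+1}(x) = (1−|x|²) u_⋆(x)/(1+|x|²). Define the quadratic forms F[f] = ∫ |∇f|² dx − d(d+2) ∫ f² (1+|x|²)^{−2} dx and G[f] = (1/(d(d+2))) ∫ f² (1+|x|²)^{−2} dx − ∫ (f/(1+|x|²)²) (−Δ)^{−1}( f/(1+|x|²)² ) dx. Then, for f in D^{1,2}(ℝ^d) ∩ L²(ℝ^d, (1+|x|²)^{−2} dx) with ∫ f f_0 (1+|x|²)^{−2} dx = 0, the following are equivalent: F[f] = 0; G[f] = 0; f is a linear combination of f_1, …, f_{d+1}. -/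

import Mathlib

open MeasureTheory Real

noncomputable section

/-- Surface area of the unit sphere `𝕊^{d-1} ⊆ ℝ^d`. -/
def sphereArea (d : ℕ) : ℝ := 2 * Real.pi ^ ((d : ℝ) / 2) / Real.Gamma ((d : ℝ) / 2)

/-- Green function of `-Δ` on `ℝ^d`, `d ≥ 3`: `G_d(x) = |x|^{2-d} / ((d-2)|𝕊^{d-1}|)`. -/
def greenKernel (d : ℕ) (x : EuclideanSpace ℝ (Fin d)) : ℝ :=
  ‖x‖ ^ ((2 : ℝ) - d) / (((d : ℝ) - 2) * sphereArea d)

/-- `(−Δ)⁻¹ v`, the convolution of `v` with the Green function of `-Δ` on `ℝ^d`. -/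
def invLap (d : ℕ) (v : EuclideanSpace ℝ (Fin d) → ℝ) (x : EuclideanSpace ℝ (Fin d)) : ℝ :=
  ∫ y, greenKernel d (x - y) * v y

/-- The Aubin–Talenti (optimal Sobolev) constant
`S_d = (1/(π d (d−2))) (Γ(d)/Γ(d/2))^{2/d}`. -/
def sobolevConst (d : ℕ) : ℝ :=
  1 / (Real.pi * d * ((d : ℝ) - 2)) *
    (Real.Gamma (d : ℝ) / Real.Gamma ((d : ℝ) / 2)) ^ ((2 : ℝ) / (d : ℝ))

/-- Membership in `D^{1,2}(ℝ^d)`: a (weakly) differentiable function with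
`∇u ∈ L²` and `u ∈ L^{2*}`, `2* = 2d/(d-2)`. -/
def MemD12 (d : ℕ) (u : EuclideanSpace ℝ (Fin d) → ℝ) : Prop :=
  Differentiable ℝ u ∧
  Integrable (fun x => ‖gradient u x‖ ^ 2) ∧
  Integrable (fun x => |u x| ^ (2 * (d : ℝ) / ((d : ℝ) - 2)))

/-- The `L^p` norm of `u`, written with real exponents: `(∫ |u|^p)^{1/p}`. -/
def lpNorm' {d : ℕ} (p : ℝ) (u : EuclideanSpace ℝ (Fin d) → ℝ) : ℝ :=
  (∫ x, |u x| ^ p) ^ (1 / p)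

/-- The Laplacian `Δu = ∑ ∂²u/∂x_i²`. -/
def lap (d : ℕ) (u : EuclideanSpace ℝ (Fin d) → ℝ) (x : EuclideanSpace ℝ (Fin d)) : ℝ :=
  ∑ i : Fin d, iteratedFDeriv ℝ 2 u x ![EuclideanSpace.single i 1, EuclideanSpace.single i 1]

/-- The Aubin–Talenti extremal function `u_⋆(x) = (1+|x|²)^{−(d−2)/2}`. -/
def uAT (d : ℕ) (x : EuclideanSpace ℝ (Fin d)) : ℝ :=
  (1 + ‖x‖ ^ 2) ^ (-(((d : ℝ) - 2) / 2))

/-- `f_i(x) = x_i u_⋆(x)/(1+|x|²)`, `i = 1, …, d`. -/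
def atFi (d : ℕ) (i : Fin d) (x : EuclideanSpace ℝ (Fin d)) : ℝ :=
  x i * uAT d x / (1 + ‖x‖ ^ 2)

/-- `f_{d+1}(x) = (1−|x|²) u_⋆(x)/(1+|x|²)`. -/
def atFlast (d : ℕ) (x : EuclideanSpace ℝ (Fin d)) : ℝ :=
  (1 - ‖x‖ ^ 2) * uAT d x / (1 + ‖x‖ ^ 2)

/-- Orthogonality, in `L²(ℝ^d, (1+|x|²)^{−2} dx)`, to `f_0 = u_⋆`, `f_1, …, f_d` and
`f_{d+1}`. -/
def orthAT (d : ℕ) (f : EuclideanSpace ℝ (Fin d) → ℝ) : Prop :=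
  (∫ x, f x * uAT d x / (1 + ‖x‖ ^ 2) ^ 2) = 0 ∧
  (∀ i : Fin d, (∫ x, f x * atFi d i x / (1 + ‖x‖ ^ 2) ^ 2) = 0) ∧
  (∫ x, f x * atFlast d x / (1 + ‖x‖ ^ 2) ^ 2) = 0

/-- The quadratic form `F`, the second-order expansion of the Sobolev deficit
around the Aubin–Talenti function. -/
def quadF (d : ℕ) (f : EuclideanSpace ℝ (Fin d) → ℝ) : ℝ :=
  (∫ x, ‖gradient f x‖ ^ 2) -
    (d : ℝ) * ((d : ℝ) + 2) * ∫ x, f x ^ 2 / (1 + ‖x‖ ^ 2) ^ 2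

/-- The quadratic form `G`, the second-order expansion of the Hardy-Littlewood-Sobolev
deficit around the Aubin–Talenti function. -/
def quadG (d : ℕ) (f : EuclideanSpace ℝ (Fin d) → ℝ) : ℝ :=
  1 / ((d : ℝ) * ((d : ℝ) + 2)) * (∫ x, f x ^ 2 / (1 + ‖x‖ ^ 2) ^ 2) -
    ∫ x, f x / (1 + ‖x‖ ^ 2) ^ 2 *
      invLap d (fun y => f y / (1 + ‖y‖ ^ 2) ^ 2) x

/-!
Let `ω` be the inverse stereographic projection and `p` a polynomial on the sphere. Since the
conformal Laplacian is covariant, `-Δ (u⋆ · p(ω)) = (1 + |x|²)⁻² u⋆ · (L p)(ω)` for an operator `L`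
on polynomials that multiplies the top-degree part of a polynomial of degree `n` by
`λ_n = (2n + d)(2n + d - 2)`. Modulo lower degree, the functions `u⋆ · p(ω)` with `deg p = n` are
therefore eigenfunctions of the Dirichlet form with respect to `L²((1 + |x|²)⁻² dx)`, with
eigenvalue `λ_n`, and of the Green form, with eigenvalue `λ_n⁻¹`; by the Stone–Weierstrass theorem
they are complete. Orthogonality to `u⋆` removes the eigenvalue `λ_0`, and `λ_1 = d(d + 2)` is the
constant in both `F` and `G`. Both forms are thus nonnegative, and either one vanishes exactly when
`f` lies in the eigenspace of `λ_1`, which is spanned by `f_1, …, f_{d+1}`.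
-/

/-! ### Powers of the Japanese bracket and symbol classes -/

section Symbols

open Asymptotics Module

variable {E F : Type*} [NormedAddCommGroup E] [NormedAddCommGroup F]

/-- The power `⟨x⟩^m` of the Japanese bracket `⟨x⟩ = (1 + |x|²)^{1/2}`, the scale in which growth at
infinity is measured. -/
def bracketPow (m : ℝ) (x : E) : ℝ := (1 + ‖x‖ ^ 2) ^ (m / 2)

lemma one_add_norm_sq_pos (x : E) : 0 < 1 + ‖x‖ ^ 2 := by positivity

lemma bracketPow_pos (m : ℝ) (x : E) : 0 < bracketPow m x :=
  rpow_pos_of_pos (one_add_norm_sq_pos x) _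

lemma norm_bracketPow (m : ℝ) (x : E) : ‖bracketPow m x‖ = bracketPow m x :=
  norm_of_nonneg (bracketPow_pos m x).le

lemma bracketPow_mul_bracketPow (a b : ℝ) (x : E) :
    bracketPow a x * bracketPow b x = bracketPow (a + b) x := by
  rw [bracketPow, bracketPow, ← rpow_add (one_add_norm_sq_pos x), ← add_div, bracketPow]

@[simp] lemma bracketPow_zero (x : E) : bracketPow 0 x = 1 := by simp [bracketPow]

lemma bracketPow_le_bracketPow {a b : ℝ} (hab : a ≤ b) (x : E) :
    bracketPow a x ≤ bracketPow b x := by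
  unfold bracketPow
  gcongr
  exact le_add_of_nonneg_right (sq_nonneg _)

lemma bracketPow_two (x : E) : bracketPow 2 x = 1 + ‖x‖ ^ 2 := by simp [bracketPow]

lemma bracketPow_neg (m : ℝ) (x : E) : bracketPow (-m) x = (bracketPow m x)⁻¹ := by
  rw [bracketPow, neg_div, rpow_neg (one_add_norm_sq_pos x).le, bracketPow]

lemma bracketPow_pow (m : ℝ) (n : ℕ) (x : E) : bracketPow m x ^ n = bracketPow (m * n) x := by
  rw [bracketPow, ← rpow_mul_natCast (one_add_norm_sq_pos x).le, bracketPow, div_mul_eq_mul_div]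

lemma norm_le_bracketPow_one (x : E) : ‖x‖ ≤ bracketPow 1 x := by
  rw [bracketPow, ← sqrt_eq_rpow]
  exact le_sqrt_of_sq_le (by linarith)

lemma isBigO_bracketPow {a b : ℝ} (hab : a ≤ b) :
    (bracketPow a : E → ℝ) =O[⊤] (bracketPow b : E → ℝ) :=
  .of_norm_le fun x ↦ (norm_bracketPow a x).trans_le (bracketPow_le_bracketPow hab x)

lemma isBigO_bracketPow_mul {a b : ℝ} {f g : E → ℝ} (hf : f =O[⊤] (bracketPow a : E → ℝ))
    (hg : g =O[⊤] (bracketPow b : E → ℝ)) :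
    (fun x ↦ f x * g x) =O[⊤] (bracketPow (a + b) : E → ℝ) :=
  (hf.mul hg).congr_right fun x ↦ bracketPow_mul_bracketPow a b x

lemma integrable_mul_of_isBigO_bracketPow [MeasurableSpace E] {μ : Measure E} {m : ℝ} {f g : E → ℝ}
    (hf : Integrable (fun x ↦ f x * bracketPow m x) μ) (hfm : AEStronglyMeasurable f μ)
    (hg : g =O[⊤] (bracketPow m : E → ℝ)) (hgm : AEStronglyMeasurable g μ) :
    Integrable (fun x ↦ f x * g x) μ := by
  obtain ⟨C, hC⟩ := isBigO_top.1 ((isBigO_refl f ⊤).mul hg)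
  exact (hf.norm.const_mul C).mono' (hfm.mul hgm) (.of_forall hC)

lemma bracketPow_comp_smul_sub_isBigO [NormedSpace ℝ E] {m : ℝ} (hm : m ≤ 0) (x₀ : E) {c : ℝ}
    (hc : c ≠ 0) : (fun x ↦ bracketPow m (c • (x - x₀))) =O[⊤] (bracketPow m : E → ℝ) := by
  set C : ℝ := 1 + 2 * ‖x₀‖ ^ 2 + 2 * (‖c‖ ^ 2)⁻¹ with hC
  refine .of_bound (C ^ (-(m / 2))) (.of_forall fun x ↦ ?_)
  have hle : 1 + ‖x‖ ^ 2 ≤ C * (1 + ‖c • (x - x₀)‖ ^ 2) := by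
    have htri : ‖x‖ ≤ ‖x - x₀‖ + ‖x₀‖ := by simpa using norm_add_le (x - x₀) x₀
    have hinv : (‖c‖ ^ 2)⁻¹ * ‖c • (x - x₀)‖ ^ 2 = ‖x - x₀‖ ^ 2 := by
      rw [norm_smul, mul_pow, inv_mul_cancel_left₀ (by positivity)]
    have hsq : ‖x‖ ^ 2 ≤ 2 * ‖x - x₀‖ ^ 2 + 2 * ‖x₀‖ ^ 2 := by
      nlinarith [sq_nonneg (‖x - x₀‖ - ‖x₀‖), norm_nonneg x]
    have hnonneg : 0 ≤ (1 + 2 * ‖x₀‖ ^ 2) * ‖c • (x - x₀)‖ ^ 2 + 2 * (‖c‖ ^ 2)⁻¹ := by positivity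
    rw [hC]
    linarith
  rw [norm_bracketPow, norm_bracketPow, rpow_neg (by positivity),
    le_inv_mul_iff₀ (by positivity), bracketPow, ← mul_rpow (by positivity) (by positivity)]
  exact rpow_le_rpow_of_nonpos (one_add_norm_sq_pos x) hle (by linarith)

variable [InnerProductSpace ℝ E]

lemma contDiff_bracketPow {n : WithTop ℕ∞} (m : ℝ) : ContDiff ℝ n (bracketPow m : E → ℝ) :=
  (contDiff_const.add (contDiff_norm_sq ℝ)).rpow_const_of_ne fun x ↦ (one_add_norm_sq_pos x).ne'

lemma continuous_bracketPow (m : ℝ) : Continuous (bracketPow m : E → ℝ) :=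
  (contDiff_bracketPow (n := 0) m).continuous

lemma hasFDerivAt_bracketPow (m : ℝ) (x : E) :
    HasFDerivAt (bracketPow m) ((m * bracketPow (m - 2) x) • innerSL ℝ x) x := by
  have h := ((hasStrictFDerivAt_norm_sq x).hasFDerivAt.const_add 1).rpow_const (p := m / 2)
    (Or.inl (one_add_norm_sq_pos x).ne')
  refine h.congr_fderiv ?_
  rw [← Nat.cast_smul_eq_nsmul ℝ, smul_smul, bracketPow]
  ring_nf

lemma integrable_bracketPow [FiniteDimensional ℝ E] [MeasurableSpace E] [BorelSpace E]
    {μ : Measure E} [μ.IsAddHaarMeasure] {m : ℝ} (hm : m < -finrank ℝ E) :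
    Integrable (bracketPow m : E → ℝ) μ := by
  convert integrable_rpow_neg_one_add_norm_sq (E := E) (μ := μ) (lt_neg_of_lt_neg hm) using 2
  rw [bracketPow, neg_neg]

lemma integrable_of_isBigO_bracketPow [FiniteDimensional ℝ E] [MeasurableSpace E] [BorelSpace E]
    {μ : Measure E} [μ.IsAddHaarMeasure] {m : ℝ} {f : E → F}
    (hf : f =O[⊤] (bracketPow m : E → ℝ)) (hfm : AEStronglyMeasurable f μ)
    (hm : m < -finrank ℝ E) : Integrable f μ := by
  obtain ⟨C, hC⟩ := isBigO_top.1 hf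
  exact ((integrable_bracketPow hm).norm.const_mul C).mono' hfm (.of_forall hC)

variable [NormedSpace ℝ F]

lemma iteratedFDeriv_comp_smul_sub {j : ℕ} {f : E → F} (hf : ContDiff ℝ j f) (c : ℝ) (x₀ : E) :
    iteratedFDeriv ℝ j (fun x ↦ f (c • (x - x₀))) =
      fun x ↦ c ^ j • iteratedFDeriv ℝ j f (c • (x - x₀)) := by
  ext1 x
  rw [iteratedFDeriv_comp_sub (f := fun x ↦ f (c • x)), iteratedFDeriv_comp_const_smul c hf]

/-- The symbol class `S^m` up to order `n`: differentiating lowers the growth order by one. -/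
def IsSymbol (n : ℕ) (m : ℝ) (f : E → F) : Prop :=
  ContDiff ℝ n f ∧ ∀ j ≤ n, iteratedFDeriv ℝ j f =O[⊤] (bracketPow (m - j) : E → ℝ)

namespace IsSymbol

variable {n : ℕ} {a b m : ℝ} {f g : E → F}

protected lemma contDiff (hf : IsSymbol n m f) : ContDiff ℝ n f := hf.1

protected lemma isBigO (hf : IsSymbol n m f) : f =O[⊤] (bracketPow m : E → ℝ) := by
  simpa using (isBigO_norm_left.2 (hf.2 0 n.zero_le)).congr_left fun _ ↦ norm_iteratedFDeriv_zero

protected lemma of_le {k : ℕ} (hf : IsSymbol n m f) (hkn : k ≤ n) : IsSymbol k m f :=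
  ⟨hf.1.of_le (by exact_mod_cast hkn), fun j hj ↦ hf.2 j (hj.trans hkn)⟩

protected lemma mono (hf : IsSymbol n a f) (hab : a ≤ b) : IsSymbol n b f :=
  ⟨hf.1, fun j hj ↦ (hf.2 j hj).trans (isBigO_bracketPow (sub_le_sub_right hab _))⟩

protected lemma fderiv (hf : IsSymbol (n + 1) m f) : IsSymbol n (m - 1) (fderiv ℝ f) := by
  refine ⟨hf.1.fderiv_right (by simp), fun j hj ↦ ?_⟩
  have h := (isBigO_norm_left.2 (hf.2 (j + 1) (by lia))).congr_left
    fun _ ↦ norm_iteratedFDeriv_fderiv.symm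
  rw [Nat.cast_succ, ← sub_sub, sub_right_comm] at h
  exact isBigO_norm_left.1 h

lemma of_fderiv (hf : Differentiable ℝ f) (h0 : f =O[⊤] (bracketPow m : E → ℝ))
    (h1 : IsSymbol n (m - 1) (fderiv ℝ f)) : IsSymbol (n + 1) m f := by
  refine ⟨contDiff_succ_iff_fderiv.2 ⟨hf, by simp, h1.1⟩, fun j hj ↦ ?_⟩
  rw [← isBigO_norm_left]
  cases j with
  | zero => simpa using h0
  | succ j =>
    simp only [← norm_iteratedFDeriv_fderiv, isBigO_norm_left]
    rw [Nat.cast_succ, ← sub_sub, sub_right_comm]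
    exact h1.2 j (by lia)

lemma clm_apply_const {G : Type*} [NormedAddCommGroup G] [NormedSpace ℝ G] {f : E → F →L[ℝ] G}
    (hf : IsSymbol n m f) (c : F) : IsSymbol n m fun x ↦ f x c :=
  ⟨hf.1.clm_apply contDiff_const, fun j hj ↦ .trans (.of_bound ‖c‖ (.of_forall fun _ ↦
    norm_iteratedFDeriv_clm_apply_const hf.1.contDiffAt (by exact_mod_cast hj))) (hf.2 j hj)⟩

protected lemma add (hf : IsSymbol n m f) (hg : IsSymbol n m g) :
    IsSymbol n m fun x ↦ f x + g x := by
  refine ⟨hf.1.add hg.1, fun j hj ↦ ?_⟩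
  have hj' : (j : WithTop ℕ∞) ≤ n := by exact_mod_cast hj
  refine ((hf.2 j hj).add (hg.2 j hj)).congr_left fun x ↦ ?_
  exact (iteratedFDeriv_add_apply (hf.1.of_le hj').contDiffAt (hg.1.of_le hj').contDiffAt).symm

protected lemma smul {f : E → ℝ} (hf : IsSymbol n a f) (hg : IsSymbol n b g) :
    IsSymbol n (a + b) fun x ↦ f x • g x := by
  refine ⟨hf.1.smul hg.1, fun j hj ↦ ?_⟩
  refine .trans (.of_norm_le fun x ↦
    norm_iteratedFDeriv_smul_le hf.1 hg.1 x (by exact_mod_cast hj)) (.fun_sum fun i hi ↦ ?_)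
  have hij : i ≤ j := Finset.mem_range_succ_iff.1 hi
  refine (isBigO_bracketPow_mul ((hf.2 i (hij.trans hj)).norm_left.const_mul_left _)
    (hg.2 (j - i) (by lia)).norm_left).congr_right fun x ↦ ?_
  rw [Nat.cast_sub hij]
  ring_nf

protected lemma mul {f g : E → ℝ} (hf : IsSymbol n a f) (hg : IsSymbol n b g) :
    IsSymbol n (a + b) fun x ↦ f x * g x := hf.smul hg

protected lemma const (c : F) : IsSymbol n 0 fun _ : E ↦ c := by
  refine ⟨contDiff_const, fun j _ ↦ ?_⟩
  cases j with
  | zero => exact .of_bound ‖c‖ (.of_forall fun x ↦ by simp)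
  | succ j =>
    rw [iteratedFDeriv_succ_const]
    exact isBigO_zero _ _

protected lemma const_mul {f : E → ℝ} (hf : IsSymbol n m f) (c : ℝ) :
    IsSymbol n m fun x ↦ c * f x := by
  simpa using (IsSymbol.const c).mul hf

lemma clm (L : E →L[ℝ] F) : IsSymbol n 1 L := by
  refine .of_le (of_fderiv (n := n) L.differentiable ?_ ?_) n.le_succ
  · refine .of_bound ‖L‖ (.of_forall fun x ↦ (L.le_opNorm x).trans ?_)
    rw [norm_bracketPow]
    gcongr
    exact norm_le_bracketPow_one x
  · simp only [sub_self, funext fun x ↦ L.fderiv (x := x)]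
    exact .const L

protected lemma bracketPow (m : ℝ) : IsSymbol n m (bracketPow m : E → ℝ) := by
  induction n generalizing m with
  | zero =>
    refine ⟨contDiff_bracketPow m, fun j hj ↦ ?_⟩
    obtain rfl := Nat.le_zero.1 hj
    exact .of_norm_le fun x ↦ by simp [abs_of_pos (bracketPow_pos m x)]
  | succ n ih =>
    refine of_fderiv ((contDiff_bracketPow (n := 1) m).differentiable one_ne_zero)
      (isBigO_bracketPow le_rfl) ?_
    have hfderiv := funext fun x : E ↦ (hasFDerivAt_bracketPow m x).fderiv
    rw [hfderiv]
    convert ((ih (m - 2)).const_mul m).smul (clm (innerSL ℝ : E →L[ℝ] E →L[ℝ] ℝ)) using 1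
    ring

lemma comp_smul_sub (hm : m ≤ 0) (hf : IsSymbol n m f) (x₀ : E) {c : ℝ} (hc : c ≠ 0) :
    IsSymbol n m fun x ↦ f (c • (x - x₀)) := by
  refine ⟨hf.1.comp (contDiff_const.smul (contDiff_id.sub contDiff_const)), fun j hj ↦ ?_⟩
  rw [iteratedFDeriv_comp_smul_sub (hf.1.of_le (by exact_mod_cast hj))]
  have hbracket := bracketPow_comp_smul_sub_isBigO (E := E) (m := m - j)
    (by linarith [j.cast_nonneg (α := ℝ)]) x₀ hc
  exact (((hf.2 j hj).comp_tendsto Filter.tendsto_top).trans hbracket).const_smul_left (c ^ j)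

end IsSymbol

end Symbols

/-! ### Integration by parts without boundary terms -/

section IntegrationByParts

open Asymptotics Module Filter Topology InnerProductSpace Laplacian

variable {E : Type*} [NormedAddCommGroup E] [InnerProductSpace ℝ E]

lemma norm_mul_bracketPow_neg_one_smul_le {c : ℝ} (hc : ‖c‖ ≤ 1) (x : E) :
    ‖c‖ * bracketPow (-1) (c • x) ≤ bracketPow (-1) x := by
  rw [bracketPow_neg, bracketPow_neg, ← div_eq_mul_inv, div_le_iff₀ (bracketPow_pos 1 _),
    le_inv_mul_iff₀ (bracketPow_pos 1 _), bracketPow, bracketPow, ← sqrt_eq_rpow, ← sqrt_eq_rpow,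
    ← sqrt_sq (norm_nonneg c), ← sqrt_mul (one_add_norm_sq_pos x).le, norm_smul, mul_pow]
  gcongr
  nlinarith [norm_nonneg c]

lemma norm_fderiv_bracketPow_apply_le (m : ℝ) (x v : E) :
    ‖fderiv ℝ (bracketPow m) x v‖ ≤ ‖m‖ * bracketPow (m - 1) x * ‖v‖ := by
  have hx : ‖m‖ * bracketPow (m - 2) x * ‖x‖ ≤ ‖m‖ * bracketPow (m - 1) x := by
    rw [mul_assoc, show m - 1 = m - 2 + 1 by ring, ← bracketPow_mul_bracketPow]
    have := (bracketPow_pos (m - 2) x).le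
    gcongr
    exact norm_le_bracketPow_one x
  calc ‖fderiv ℝ (bracketPow m) x v‖ = ‖m‖ * bracketPow (m - 2) x * ‖⟪x, v⟫_ℝ‖ := by
        rw [(hasFDerivAt_bracketPow m x).fderiv, smul_apply, norm_smul,
          norm_mul, norm_bracketPow, innerSL_apply_apply]
    _ ≤ ‖m‖ * bracketPow (m - 2) x * (‖x‖ * ‖v‖) := by
        have := (bracketPow_pos (m - 2) x).le
        gcongr
        exact norm_inner_le_norm x v
    _ ≤ ‖m‖ * bracketPow (m - 1) x * ‖v‖ := by
        rw [← mul_assoc]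
        gcongr

/-- The cutoff `x ↦ ⟨cx⟩⁻¹`, equal to `1` at `c = 0`. Its derivatives are bounded by `⟨x⟩⁻¹`
uniformly in `c ≤ 1`. -/
def bracketCutoff (c : ℝ) (x : E) : ℝ := bracketPow (-1) (c • x)

lemma contDiff_bracketCutoff {n : WithTop ℕ∞} (c : ℝ) :
    ContDiff ℝ n (bracketCutoff c : E → ℝ) :=
  (contDiff_bracketPow (-1)).comp (contDiff_const_smul c)

lemma norm_bracketCutoff_le_one (c : ℝ) (x : E) : ‖bracketCutoff c x‖ ≤ 1 := by
  rw [bracketCutoff, norm_bracketPow]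
  exact (bracketPow_le_bracketPow (by norm_num) _).trans_eq (bracketPow_zero _)

lemma fderiv_bracketCutoff (c : ℝ) (x : E) :
    fderiv ℝ (bracketCutoff c) x = c • fderiv ℝ (bracketPow (-1)) (c • x) :=
  fderiv_comp_smul c

lemma norm_fderiv_bracketCutoff_apply_le {c : ℝ} (hc : ‖c‖ ≤ 1) (x v : E) :
    ‖fderiv ℝ (bracketCutoff c) x v‖ ≤ ‖v‖ * bracketPow (-1) x := by
  calc ‖fderiv ℝ (bracketCutoff c) x v‖
      ≤ ‖c‖ * (‖(-1 : ℝ)‖ * bracketPow (-1 - 1) (c • x) * ‖v‖) := by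
        rw [fderiv_bracketCutoff, smul_apply, norm_smul]
        gcongr
        exact norm_fderiv_bracketPow_apply_le _ _ _
    _ ≤ ‖c‖ * (1 * bracketPow (-1) (c • x) * ‖v‖) := by
        rw [norm_neg, norm_one]
        gcongr
        exact bracketPow_le_bracketPow (by norm_num) _
    _ = ‖v‖ * (‖c‖ * bracketPow (-1) (c • x)) := by ring
    _ ≤ ‖v‖ * bracketPow (-1) x := by
        gcongr
        exact norm_mul_bracketPow_neg_one_smul_le hc x

lemma tendsto_bracketCutoff (x : E) : Tendsto (fun c ↦ bracketCutoff c x) (𝓝 0) (𝓝 1) := by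
  have hcont : Continuous fun c : ℝ ↦ bracketCutoff c x :=
    (continuous_bracketPow (-1)).comp (continuous_id.smul continuous_const)
  simpa [bracketCutoff, bracketPow] using hcont.tendsto 0

lemma tendsto_fderiv_bracketCutoff_apply (x v : E) :
    Tendsto (fun c ↦ fderiv ℝ (bracketCutoff c) x v) (𝓝 0) (𝓝 0) := by
  have hcont : Continuous fun c : ℝ ↦ c • fderiv ℝ (bracketPow (-1)) (c • x) v :=
    continuous_id.smul ((((contDiff_bracketPow (n := 1) (-1)).continuous_fderiv one_ne_zero).comp
      (continuous_id.smul continuous_const)).clm_apply continuous_const)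
  simpa [fderiv_bracketCutoff] using hcont.tendsto 0

section Cutoff

variable {h : E → ℝ} {v : E}

lemma norm_mul_fderiv_bracketCutoff_apply_le {c : ℝ} (hc : ‖c‖ ≤ 1) (x : E) :
    ‖h x * fderiv ℝ (bracketCutoff c) x v‖ ≤ ‖v‖ * ‖h x * bracketPow (-1) x‖ := by
  rw [norm_mul, norm_mul, norm_bracketPow, mul_left_comm]
  gcongr
  exact norm_fderiv_bracketCutoff_apply_le hc x v

lemma aestronglyMeasurable_mul_fderiv_bracketCutoff [MeasurableSpace E] [BorelSpace E]
    {μ : Measure E} (hh : Continuous h) (c : ℝ) :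
    AEStronglyMeasurable (fun x ↦ h x * fderiv ℝ (bracketCutoff c) x v) μ :=
  (hh.mul (((contDiff_bracketCutoff (n := 1) c).continuous_fderiv one_ne_zero).clm_apply
    continuous_const)).aestronglyMeasurable

variable [FiniteDimensional ℝ E] [MeasurableSpace E] [BorelSpace E] {μ : Measure E}

lemma integral_mul_fderiv_bracketCutoff [μ.IsAddHaarMeasure] (hh : Differentiable ℝ h)
    (hi : Integrable (fun x ↦ fderiv ℝ h x v) μ)
    (hw : Integrable (fun x ↦ h x * bracketPow (-1) x) μ) {c : ℝ} (hc : ‖c‖ ≤ 1) (hc0 : c ≠ 0) :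
    ∫ x, h x * fderiv ℝ (bracketCutoff c) x v ∂μ =
      -∫ x, fderiv ℝ h x v * bracketCutoff c x ∂μ := by
  have hcutoff : Continuous (bracketCutoff c : E → ℝ) :=
    (contDiff_bracketCutoff (n := 0) c).continuous
  have hdecay : (fun x : E ↦ bracketCutoff c x) =O[⊤] (bracketPow (-1) : E → ℝ) := by
    simpa [bracketCutoff] using bracketPow_comp_smul_sub_isBigO (m := -1) (by simp) (0 : E) hc0
  obtain ⟨C, hC⟩ := isBigO_top.1 ((isBigO_refl h ⊤).mul hdecay)
  refine integral_mul_fderiv_eq_neg_fderiv_mul_of_integrable ?_ ?_ ?_ (fun x _ ↦ hh x)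
    fun x _ ↦ (contDiff_bracketCutoff (n := 1) c).differentiable one_ne_zero x
  · exact hi.mul_bdd (c := 1) hcutoff.aestronglyMeasurable
      (.of_forall (norm_bracketCutoff_le_one c))
  · exact (hw.norm.const_mul ‖v‖).mono'
      (aestronglyMeasurable_mul_fderiv_bracketCutoff hh.continuous c)
      (.of_forall (norm_mul_fderiv_bracketCutoff_apply_le hc))
  · exact (hw.norm.const_mul C).mono' (hh.continuous.mul hcutoff).aestronglyMeasurable
      (.of_forall hC)

theorem integral_fderiv_apply_eq_zero [μ.IsAddHaarMeasure] (hh : Differentiable ℝ h)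
    (hi : Integrable (fun x ↦ fderiv ℝ h x v) μ)
    (hw : Integrable (fun x ↦ h x * bracketPow (-1) x) μ) :
    ∫ x, fderiv ℝ h x v ∂μ = 0 := by
  have hsmall : ∀ᶠ c : ℝ in 𝓝[≠] 0, ‖c‖ ≤ 1 :=
    nhdsWithin_le_nhds (continuous_norm.continuousAt.eventually_le_const (by simp))
  have hleft : Tendsto (fun c ↦ ∫ x, h x * fderiv ℝ (bracketCutoff c) x v ∂μ) (𝓝[≠] 0)
      (𝓝 (∫ _, (0 : ℝ) ∂μ)) :=
    tendsto_integral_filter_of_dominated_convergence _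
      (.of_forall (aestronglyMeasurable_mul_fderiv_bracketCutoff hh.continuous))
      (hsmall.mono fun c hc ↦ .of_forall (norm_mul_fderiv_bracketCutoff_apply_le hc))
      (hw.norm.const_mul ‖v‖) (.of_forall fun x ↦ by
        simpa using ((tendsto_fderiv_bracketCutoff_apply x v).mono_left
          nhdsWithin_le_nhds).const_mul (h x))
  have hright : Tendsto (fun c ↦ ∫ x, fderiv ℝ h x v * bracketCutoff c x ∂μ) (𝓝[≠] 0)
      (𝓝 (∫ x, fderiv ℝ h x v ∂μ)) :=
    tendsto_integral_filter_of_dominated_convergence _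
      (.of_forall fun c ↦ hi.aestronglyMeasurable.mul
        (contDiff_bracketCutoff (n := 0) c).continuous.aestronglyMeasurable)
      (.of_forall fun c ↦ .of_forall fun x ↦ by
        simpa using mul_le_mul_of_nonneg_left (norm_bracketCutoff_le_one c x)
          (norm_nonneg (fderiv ℝ h x v)))
      hi.norm (.of_forall fun x ↦ by
        simpa using ((tendsto_bracketCutoff x).mono_left nhdsWithin_le_nhds).const_mul
          (fderiv ℝ h x v))
  have hparts : (fun c ↦ -∫ x, h x * fderiv ℝ (bracketCutoff c) x v ∂μ) =ᶠ[𝓝[≠] 0]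
      fun c ↦ ∫ x, fderiv ℝ h x v * bracketCutoff c x ∂μ := by
    filter_upwards [hsmall, self_mem_nhdsWithin] with c hc hc0
    rw [integral_mul_fderiv_bracketCutoff hh hi hw hc hc0, neg_neg]
  simpa using tendsto_nhds_unique hright (hleft.neg.congr' hparts)

end Cutoff

section Laplacian

variable [FiniteDimensional ℝ E]

variable {f g : E → ℝ}

lemma laplacian_eq_sum_fderiv_fderiv {ι : Type*} [Fintype ι] (b : OrthonormalBasis ι ℝ E)
    (hf : ContDiff ℝ 2 f) (x : E) :
    (Δ f) x = ∑ i, fderiv ℝ (fun y ↦ fderiv ℝ f y (b i)) x (b i) := by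
  have hf' : DifferentiableAt ℝ (fderiv ℝ f) x :=
    (hf.fderiv_right le_rfl).differentiable one_ne_zero x
  simp [laplacian_eq_iteratedFDeriv_orthonormalBasis f b, iteratedFDeriv_two_apply,
    fderiv_clm_apply hf']

lemma inner_gradient_gradient_eq_sum {ι : Type*} [Fintype ι] (b : OrthonormalBasis ι ℝ E) (x : E) :
    ⟪gradient f x, gradient g x⟫_ℝ = ∑ i, fderiv ℝ f x (b i) * fderiv ℝ g x (b i) := by
  rw [← b.sum_inner_mul_inner]
  simp only [inner_gradient_left, inner_gradient_right, conj_trivial]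

lemma continuous_gradient (hf : ContDiff ℝ 1 f) : Continuous (gradient f) :=
  (toDual ℝ E).symm.continuous.comp (hf.continuous_fderiv one_ne_zero)

lemma continuous_laplacian (hf : ContDiff ℝ 2 f) : Continuous (Δ f) := by
  have : Continuous fun x ↦ iteratedFDeriv ℝ 2 f x := hf.continuous_iteratedFDeriv'
  rw [laplacian_eq_iteratedFDeriv_stdOrthonormalBasis]
  fun_prop

lemma IsSymbol.gradient_isBigO {n : ℕ} {m : ℝ} (hf : IsSymbol (n + 1) m f) :
    gradient f =O[⊤] (bracketPow (m - 1) : E → ℝ) :=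
  isBigO_norm_left.1 (hf.fderiv.isBigO.norm_left.congr_left fun x ↦ by
    rw [← toDual_gradient, LinearIsometryEquiv.norm_map])

variable [MeasurableSpace E] [BorelSpace E] {μ : Measure E}

lemma integral_fderiv_mul_fderiv_eq_neg_integral_mul [μ.IsAddHaarMeasure] {m : ℝ}
    (hf : Differentiable ℝ f) (hg : IsSymbol 2 m g) (v : E)
    (hf0 : Integrable (fun x ↦ f x * bracketPow (m - 2) x) μ)
    (hf1 : Integrable (fun x ↦ fderiv ℝ f x v * fderiv ℝ g x v) μ) :
    Integrable (fun x ↦ f x * fderiv ℝ (fun y ↦ fderiv ℝ g y v) x v) μ ∧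
    ∫ x, fderiv ℝ f x v * fderiv ℝ g x v ∂μ =
      -∫ x, f x * fderiv ℝ (fun y ↦ fderiv ℝ g y v) x v ∂μ := by
  have hg1 : IsSymbol 1 (m - 1) fun x ↦ fderiv ℝ g x v := hg.fderiv.clm_apply_const v
  have hg1' : Differentiable ℝ fun x ↦ fderiv ℝ g x v := hg1.contDiff.differentiable (by simp)
  have hg2 : IsSymbol 0 (m - 2) fun x ↦ fderiv ℝ (fun y ↦ fderiv ℝ g y v) x v := by
    convert hg1.fderiv.clm_apply_const v using 1
    ring
  have hprod (x : E) : fderiv ℝ (fun y ↦ f y * fderiv ℝ g y v) x v =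
      fderiv ℝ f x v * fderiv ℝ g x v + f x * fderiv ℝ (fun y ↦ fderiv ℝ g y v) x v := by
    rw [fderiv_fun_mul (hf x) (hg1' x)]
    simp [mul_comm, add_comm]
  have hintegrable : Integrable (fun x ↦ f x * fderiv ℝ (fun y ↦ fderiv ℝ g y v) x v) μ :=
    integrable_mul_of_isBigO_bracketPow hf0 hf.continuous.aestronglyMeasurable hg2.isBigO
      hg2.contDiff.continuous.aestronglyMeasurable
  have hweight : Integrable (fun x ↦ f x * fderiv ℝ g x v * bracketPow (-1) x) μ := by
    simp only [mul_assoc]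
    refine integrable_mul_of_isBigO_bracketPow hf0 hf.continuous.aestronglyMeasurable ?_
      (hg1'.continuous.mul (continuous_bracketPow _)).aestronglyMeasurable
    convert isBigO_bracketPow_mul hg1.isBigO (isBigO_bracketPow le_rfl) using 2
    ring
  have hzero := integral_fderiv_apply_eq_zero (v := v) (hf.fun_mul hg1')
    ((hf1.add hintegrable).congr (.of_forall fun x ↦ (hprod x).symm)) hweight
  refine ⟨hintegrable, ?_⟩
  rw [integral_congr_ae (.of_forall hprod), integral_add hf1 hintegrable] at hzero
  linarith

theorem integral_inner_gradient_eq_neg_integral_mul_laplacian [μ.IsAddHaarMeasure] {m : ℝ}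
    (hf : Differentiable ℝ f) (hg : IsSymbol 2 m g)
    (hf0 : Integrable (fun x ↦ f x * bracketPow (m - 2) x) μ)
    (hf1 : Integrable (fun x ↦ ‖gradient f x‖ * bracketPow (m - 1) x) μ) :
    ∫ x, ⟪gradient f x, gradient g x⟫_ℝ ∂μ = -∫ x, f x * (Δ g) x ∂μ := by
  have hpartial (v : E) : Integrable (fun x ↦ fderiv ℝ f x v * fderiv ℝ g x v) μ := by
    have hg1 : IsSymbol 1 (m - 1) fun x ↦ fderiv ℝ g x v := hg.fderiv.clm_apply_const v
    have hbound : Integrable (fun x ↦ fderiv ℝ f x v * bracketPow (m - 1) x) μ := by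
      refine (hf1.norm.const_mul ‖v‖).mono' ((measurable_fderiv_apply_const ℝ f v).mul
        (continuous_bracketPow _).measurable).aestronglyMeasurable (.of_forall fun x ↦ ?_)
      rw [norm_mul, norm_mul, norm_norm, ← mul_assoc, ← inner_gradient_left, mul_comm ‖v‖]
      gcongr
      exact norm_inner_le_norm _ _
    exact integrable_mul_of_isBigO_bracketPow hbound
      (measurable_fderiv_apply_const ℝ f v).aestronglyMeasurable hg1.isBigO
      hg1.contDiff.continuous.aestronglyMeasurable
  have hparts (v : E) := integral_fderiv_mul_fderiv_eq_neg_integral_mul hf hg v hf0 (hpartial v)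
  simp only [inner_gradient_gradient_eq_sum (stdOrthonormalBasis ℝ E),
    laplacian_eq_sum_fderiv_fderiv (stdOrthonormalBasis ℝ E) hg.contDiff, Finset.mul_sum]
  rw [integral_finsetSum _ fun i _ ↦ hpartial _, integral_finsetSum _ fun i _ ↦ (hparts _).1,
    ← Finset.sum_neg_distrib]
  exact Finset.sum_congr rfl fun i _ ↦ (hparts _).2

theorem IsSymbol.integral_mul_laplacian_comm [μ.IsAddHaarMeasure] {a b : ℝ}
    (hf : IsSymbol 2 a f) (hg : IsSymbol 2 b g) (hab : a + b - 2 < -finrank ℝ E) :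
    ∫ x, f x * (Δ g) x ∂μ = ∫ x, g x * (Δ f) x ∂μ := by
  have hparts {a b : ℝ} {f g : E → ℝ} (hf : IsSymbol 2 a f) (hg : IsSymbol 2 b g)
      (hab : a + b - 2 < -finrank ℝ E) :
      ∫ x, ⟪gradient f x, gradient g x⟫_ℝ ∂μ = -∫ x, f x * (Δ g) x ∂μ := by
    have hf' : Differentiable ℝ f := hf.contDiff.differentiable two_ne_zero
    refine integral_inner_gradient_eq_neg_integral_mul_laplacian hf' hg ?_ ?_
    · refine integrable_of_isBigO_bracketPow
        (isBigO_bracketPow_mul hf.isBigO (isBigO_bracketPow le_rfl))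
        (hf'.continuous.mul (continuous_bracketPow _)).aestronglyMeasurable (by linarith)
    · refine integrable_of_isBigO_bracketPow (isBigO_bracketPow_mul
        hf.gradient_isBigO.norm_left (isBigO_bracketPow le_rfl)) ?_ (by linarith)
      exact ((continuous_gradient (hf.contDiff.of_le one_le_two)).norm.mul
        (continuous_bracketPow _)).aestronglyMeasurable
  have hcomm : ∫ x, ⟪gradient f x, gradient g x⟫_ℝ ∂μ = ∫ x, ⟪gradient g x, gradient f x⟫_ℝ ∂μ :=
    integral_congr_ae (.of_forall fun x ↦ real_inner_comm _ _)
  linarith [hparts hf hg hab, hparts hg hf (by linarith)]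

end Laplacian

end IntegrationByParts

/-! ### The Laplacian of polynomials in given functions -/

section ChainRule

open MvPolynomial InnerProductSpace Laplacian

variable {E σ : Type*} [NormedAddCommGroup E] {ω : σ → E → ℝ}

lemma contDiff_eval [NormedSpace ℝ E] {n : WithTop ℕ∞} (hω : ∀ a, ContDiff ℝ n (ω a))
    (p : MvPolynomial σ ℝ) : ContDiff ℝ n fun x ↦ eval (fun a ↦ ω a x) p := by
  simp only [eval_eq]
  exact ContDiff.sum fun m _ ↦ contDiff_const.mul (contDiff_prod fun a _ ↦ (hω a).pow _)

lemma IsSymbol.eval [InnerProductSpace ℝ E] {n : ℕ} (hω : ∀ a, IsSymbol n 0 (ω a))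
    (p : MvPolynomial σ ℝ) : IsSymbol n 0 fun x ↦ eval (fun a ↦ ω a x) p := by
  induction p using MvPolynomial.induction_on with
  | C c => simpa using IsSymbol.const c
  | add p q hp hq => simpa using hp.add hq
  | mul_X p a hp => simpa using hp.mul (hω a)

lemma differentiable_fderiv_apply [NormedSpace ℝ E] {f : E → ℝ} (hf : ContDiff ℝ 2 f) (v : E) :
    Differentiable ℝ fun x ↦ fderiv ℝ f x v :=
  ((hf.fderiv_right le_rfl).clm_apply contDiff_const).differentiable one_ne_zero

lemma hasFDerivAt_eval [NormedSpace ℝ E] [Fintype σ] {x : E}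
    (hω : ∀ a, DifferentiableAt ℝ (ω a) x) (p : MvPolynomial σ ℝ) :
    HasFDerivAt (fun y ↦ eval (fun a ↦ ω a y) p)
      (∑ a, eval (fun a ↦ ω a x) (pderiv a p) • fderiv ℝ (ω a) x) x := by
  classical
  induction p using MvPolynomial.induction_on with
  | C c => simpa using hasFDerivAt_const c x
  | add p q hp hq => simpa [add_smul, Finset.sum_add_distrib] using hp.fun_add hq
  | mul_X p b hp =>
    simp only [map_mul, eval_X]
    refine (hp.mul (hω b).hasFDerivAt).congr_fderiv ?_
    simp [pderiv_X, Pi.single_apply, apply_ite, add_smul, Finset.sum_add_distrib, Finset.smul_sum,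
      mul_smul]

variable [InnerProductSpace ℝ E] [FiniteDimensional ℝ E] {u f g : E → ℝ}

lemma laplacian_fun_mul (hf : ContDiff ℝ 2 f) (hg : ContDiff ℝ 2 g) (x : E) :
    (Δ fun y ↦ f y * g y) x =
      f x * (Δ g) x + 2 * ⟪gradient f x, gradient g x⟫_ℝ + g x * (Δ f) x := by
  have hf' : Differentiable ℝ f := hf.differentiable two_ne_zero
  have hg' : Differentiable ℝ g := hg.differentiable two_ne_zero
  have hfirst (v : E) : (fun y ↦ fderiv ℝ (fun z ↦ f z * g z) y v) =
      fun y ↦ f y * fderiv ℝ g y v + g y * fderiv ℝ f y v := by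
    ext1 y
    simp [fderiv_fun_mul (hf' y) (hg' y)]
  have hsecond (v : E) : fderiv ℝ (fun y ↦ fderiv ℝ (fun z ↦ f z * g z) y v) x v =
      f x * fderiv ℝ (fun y ↦ fderiv ℝ g y v) x v + 2 * (fderiv ℝ f x v * fderiv ℝ g x v) +
        g x * fderiv ℝ (fun y ↦ fderiv ℝ f y v) x v := by
    have hfv := differentiable_fderiv_apply hf v x
    have hgv := differentiable_fderiv_apply hg v x
    rw [hfirst, fderiv_fun_add ((hf' x).fun_mul hgv) ((hg' x).fun_mul hfv),
      fderiv_fun_mul (hf' x) hgv, fderiv_fun_mul (hg' x) hfv]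
    simp only [add_apply, smul_apply, smul_eq_mul]
    ring
  let b := stdOrthonormalBasis ℝ E
  simp only [laplacian_eq_sum_fderiv_fderiv b (hf.mul hg), laplacian_eq_sum_fderiv_fderiv b hf,
    laplacian_eq_sum_fderiv_fderiv b hg, inner_gradient_gradient_eq_sum b, hsecond,
    Finset.sum_add_distrib, Finset.mul_sum]

variable [Fintype σ]

lemma inner_gradient_gradient_eval (hω : ∀ a, Differentiable ℝ (ω a)) (p : MvPolynomial σ ℝ)
    (x : E) :
    ⟪gradient u x, gradient (fun y ↦ eval (fun a ↦ ω a y) p) x⟫_ℝ =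
      ∑ a, eval (fun a ↦ ω a x) (pderiv a p) * ⟪gradient u x, gradient (ω a) x⟫_ℝ := by
  simp [inner_gradient_right, (hasFDerivAt_eval (fun a ↦ hω a x) p).fderiv]

lemma laplacian_eval (hω : ∀ a, ContDiff ℝ 2 (ω a)) (p : MvPolynomial σ ℝ) (x : E) :
    (Δ fun y ↦ eval (fun a ↦ ω a y) p) x =
      ∑ a, (eval (fun a ↦ ω a x) (pderiv a p) * (Δ (ω a)) x +
        ∑ b, eval (fun a ↦ ω a x) (pderiv b (pderiv a p)) *
          ⟪gradient (ω b) x, gradient (ω a) x⟫_ℝ) := by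
  have hω' (a : σ) : Differentiable ℝ (ω a) := (hω a).differentiable two_ne_zero
  have hfirst (v : E) : (fun y ↦ fderiv ℝ (fun z ↦ eval (fun a ↦ ω a z) p) y v) =
      fun y ↦ ∑ a, eval (fun a ↦ ω a y) (pderiv a p) * fderiv ℝ (ω a) y v := by
    ext1 y
    simp [(hasFDerivAt_eval (fun a ↦ hω' a y) p).fderiv]
  have hsecond (v : E) : fderiv ℝ (fun y ↦ fderiv ℝ (fun z ↦ eval (fun a ↦ ω a z) p) y v) x v =
      ∑ a, (eval (fun a ↦ ω a x) (pderiv a p) * fderiv ℝ (fun y ↦ fderiv ℝ (ω a) y v) x v +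
        ∑ b, eval (fun a ↦ ω a x) (pderiv b (pderiv a p)) *
          (fderiv ℝ (ω b) x v * fderiv ℝ (ω a) x v)) := by
    have hterm (a : σ) := (hasFDerivAt_eval (fun a ↦ hω' a x) (pderiv a p)).fun_mul
      (differentiable_fderiv_apply (hω a) v x).hasFDerivAt
    rw [hfirst, (HasFDerivAt.fun_sum fun a _ ↦ hterm a).fderiv]
    simp [Finset.mul_sum, mul_assoc, mul_comm]
  let b := stdOrthonormalBasis ℝ E
  simp only [laplacian_eq_sum_fderiv_fderiv b (contDiff_eval hω p),
    laplacian_eq_sum_fderiv_fderiv b (hω _), inner_gradient_gradient_eq_sum b, hsecond,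
    Finset.mul_sum]
  rw [Finset.sum_comm]
  refine Finset.sum_congr rfl fun a _ ↦ ?_
  rw [Finset.sum_add_distrib, Finset.sum_comm (s := Finset.univ (α := Fin _))]

lemma laplacian_mul_eval (hu : ContDiff ℝ 2 u) (hω : ∀ a, ContDiff ℝ 2 (ω a))
    (p : MvPolynomial σ ℝ) (x : E) :
    (Δ fun y ↦ u y * eval (fun a ↦ ω a y) p) x =
      (Δ u) x * eval (fun a ↦ ω a x) p +
      ∑ a, eval (fun a ↦ ω a x) (pderiv a p) *
        (u x * (Δ (ω a)) x + 2 * ⟪gradient u x, gradient (ω a) x⟫_ℝ) +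
      u x * ∑ a, ∑ b, eval (fun a ↦ ω a x) (pderiv b (pderiv a p)) *
        ⟪gradient (ω b) x, gradient (ω a) x⟫_ℝ := by
  rw [laplacian_fun_mul hu (contDiff_eval hω p), laplacian_eval hω,
    inner_gradient_gradient_eval fun a ↦ (hω a).differentiable two_ne_zero]
  simp only [mul_add, Finset.sum_add_distrib, Finset.mul_sum, mul_left_comm]
  ring

end ChainRule

/-! ### The polynomial operator of the conformal Laplacian -/

section BubbleOp

open MvPolynomial

variable {σ R : Type*} [CommRing R]

lemma restrictTotalDegree_mono {m n : ℕ} (hmn : m ≤ n) :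
    restrictTotalDegree σ R m ≤ restrictTotalDegree σ R n := fun _ hp ↦
  (mem_restrictTotalDegree ..).2 (((mem_restrictTotalDegree ..).1 hp).trans hmn)

variable [Fintype σ]

/-- The Euler operator `∑ Xₐ ∂ₐ`, which acts on homogeneous polynomials of degree `n` as
multiplication by `n`. -/
def eulerOp : Module.End R (MvPolynomial σ R) :=
  ∑ a, LinearMap.mulLeft R (X a) ∘ₗ (pderiv a).toLinearMap

/-- The formal Laplacian `∑ ∂ₐ²` on polynomials. -/
def polyLaplacian : Module.End R (MvPolynomial σ R) :=
  ∑ a, (pderiv a).toLinearMap ∘ₗ (pderiv a).toLinearMap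

/-- Multiplied by `(1 + |x|²)⁻²`, this is the operator by which `-Δ` acts on `u⋆ · p(ω)`, where `ω`
is the inverse stereographic projection of `ℝ^c` onto the unit sphere; it is four times the
conformal Laplacian of the sphere in terms of its ambient coordinates. -/
def bubbleOp (c : R) : Module.End R (MvPolynomial σ R) :=
  ((2 : R) • eulerOp + c • 1) * ((2 : R) • eulerOp + (c - 2) • 1) - (4 : R) • polyLaplacian

/-- The eigenvalue of `bubbleOp c` on the space of polynomials of degree `n` modulo those of lower
degree. -/
def bubbleEigenvalue (c : R) (n : ℕ) : R := (2 * n + c) * (2 * n + c - 2)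

lemma bubbleEigenvalue_one (c : R) : bubbleEigenvalue c 1 = c * (c + 2) := by
  rw [bubbleEigenvalue, Nat.cast_one]
  ring

lemma bubbleEigenvalue_pos {c : ℝ} (hc : 2 < c) (n : ℕ) : 0 < bubbleEigenvalue c n := by
  have : (0 : ℝ) ≤ n := n.cast_nonneg
  exact mul_pos (by linarith) (by linarith)

lemma strictMono_bubbleEigenvalue {c : ℝ} (hc : 2 < c) : StrictMono (bubbleEigenvalue c) := by
  refine strictMono_nat_of_lt_succ fun n ↦ ?_
  have : (0 : ℝ) ≤ n := n.cast_nonneg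
  simp only [bubbleEigenvalue, Nat.cast_succ]
  nlinarith

lemma eulerOp_apply (p : MvPolynomial σ R) : eulerOp p = ∑ a, X a * pderiv a p := by
  simp [eulerOp]

lemma polyLaplacian_apply (p : MvPolynomial σ R) :
    polyLaplacian p = ∑ a, pderiv a (pderiv a p) := by
  simp [polyLaplacian]

lemma bubbleOp_apply (c : R) (p : MvPolynomial σ R) :
    bubbleOp c p = (4 : R) • (eulerOp (eulerOp p) - eulerOp p) + (4 * c) • eulerOp p +
      (c * (c - 2)) • p - (4 : R) • polyLaplacian p := by
  simp only [bubbleOp, LinearMap.sub_apply, Module.End.mul_apply, LinearMap.add_apply,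
    LinearMap.smul_apply, Module.End.one_apply, map_add, map_smul]
  module

lemma eulerOp_eulerOp_sub (p : MvPolynomial σ R) :
    eulerOp (eulerOp p) - eulerOp p = ∑ a, ∑ b, X a * X b * pderiv b (pderiv a p) := by
  classical
  rw [sub_eq_iff_eq_add, eulerOp_apply (eulerOp p), eulerOp_apply p]
  simp only [map_sum, pderiv_mul, pderiv_X, Pi.single_apply, Finset.mul_sum, mul_add,
    Finset.sum_add_distrib, ite_mul, one_mul, zero_mul, Finset.sum_ite_eq',
    Finset.mem_univ, if_true]
  rw [Finset.sum_comm, add_comm]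
  simp only [mul_left_comm, mul_assoc]

lemma bubbleOp_eq_of_isHomogeneous (c : R) {n : ℕ} {p : MvPolynomial σ R} (hp : p.IsHomogeneous n) :
    bubbleOp c p = bubbleEigenvalue c n • p - (4 : R) • polyLaplacian p := by
  have heuler : eulerOp p = (n : R) • p := by
    rw [eulerOp_apply, hp.sum_X_mul_pderiv, Nat.cast_smul_eq_nsmul]
  simp only [bubbleOp_apply, bubbleEigenvalue, heuler, map_smul]
  module

lemma bubbleOp_X (c : R) (a : σ) :
    bubbleOp c (X a : MvPolynomial σ R) = bubbleEigenvalue c 1 • X a := by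
  classical
  simp [bubbleOp_eq_of_isHomogeneous c (isHomogeneous_X R a), polyLaplacian_apply, pderiv_X,
    Pi.single_apply, apply_ite]

lemma bubbleOp_one (c : R) :
    bubbleOp c (1 : MvPolynomial σ R) = bubbleEigenvalue c 0 • 1 := by
  simp [bubbleOp_eq_of_isHomogeneous c (isHomogeneous_one σ R), polyLaplacian_apply]

lemma polyLaplacian_mem_restrictTotalDegree {n : ℕ} {p : MvPolynomial σ R}
    (hp : p.IsHomogeneous n) : polyLaplacian p ∈ restrictTotalDegree σ R (n - 1) := by
  rw [polyLaplacian_apply]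
  refine Submodule.sum_mem _ fun a _ ↦ (mem_restrictTotalDegree ..).2 ?_
  exact ((hp.pderiv (i := a)).pderiv (i := a)).totalDegree_le.trans (Nat.sub_le _ _)

lemma bubbleOp_sub_mem_restrictTotalDegree (c : R) {n : ℕ} {p : MvPolynomial σ R}
    (hp : p ∈ restrictTotalDegree σ R n) :
    bubbleOp c p - bubbleEigenvalue c n • p ∈ restrictTotalDegree σ R (n - 1) := by
  rw [← p.sum_homogeneousComponent, map_sum, Finset.smul_sum, ← Finset.sum_sub_distrib]
  refine Submodule.sum_mem _ fun k hk ↦ ?_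
  have hkn : k ≤ n :=
    (Finset.mem_range_succ_iff.1 hk).trans ((mem_restrictTotalDegree ..).1 hp)
  have hhom := homogeneousComponent_isHomogeneous k p
  rw [bubbleOp_eq_of_isHomogeneous c hhom, sub_right_comm]
  have hlap := restrictTotalDegree_mono (Nat.sub_le_sub_right hkn 1)
    (polyLaplacian_mem_restrictTotalDegree hhom)
  refine Submodule.sub_mem _ ?_ (Submodule.smul_mem _ _ hlap)
  obtain rfl | hlt := hkn.eq_or_lt
  · simp
  · have hmem : homogeneousComponent k p ∈ restrictTotalDegree σ R (n - 1) :=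
      (mem_restrictTotalDegree ..).2 (hhom.totalDegree_le.trans (Nat.le_sub_one_of_lt hlt))
    exact Submodule.sub_mem _ (Submodule.smul_mem _ _ hmem) (Submodule.smul_mem _ _ hmem)

lemma bubbleOp_mem_restrictTotalDegree (c : R) {n : ℕ} {p : MvPolynomial σ R}
    (hp : p ∈ restrictTotalDegree σ R n) : bubbleOp c p ∈ restrictTotalDegree σ R n := by
  rw [← sub_add_cancel (bubbleOp c p) (bubbleEigenvalue c n • p)]
  exact Submodule.add_mem _ (restrictTotalDegree_mono (Nat.sub_le n 1)
    (bubbleOp_sub_mem_restrictTotalDegree c hp)) (Submodule.smul_mem _ _ hp)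

end BubbleOp

/-! ### Aubin–Talenti functions and the stereographic projection -/

section Gradients

open Module InnerProductSpace Laplacian

variable {E : Type*} [NormedAddCommGroup E]

lemma norm_sq_mul_bracketPow (m : ℝ) (x : E) :
    ‖x‖ ^ 2 * bracketPow m x = bracketPow (m + 2) x - bracketPow m x := by
  rw [← bracketPow_mul_bracketPow, bracketPow_two]
  ring

lemma bracketPow_neg_two_mul_norm_sq (x : E) :
    bracketPow (-2) x * ‖x‖ ^ 2 = 1 - bracketPow (-2) x := by
  simpa [mul_comm] using norm_sq_mul_bracketPow (-2) x

lemma bracketPow_neg_four (x : E) : bracketPow (-4) x = bracketPow (-2) x ^ 2 := by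
  rw [bracketPow_pow]
  norm_num

lemma bracketPow_neg_six (x : E) : bracketPow (-6) x = bracketPow (-2) x ^ 3 := by
  rw [bracketPow_pow]
  norm_num

variable [InnerProductSpace ℝ E] [FiniteDimensional ℝ E]

lemma gradient_bracketPow (m : ℝ) (x : E) :
    gradient (bracketPow m) x = (m * bracketPow (m - 2) x) • x :=
  ext_inner_right ℝ fun v ↦ by
    simp [inner_gradient_left, (hasFDerivAt_bracketPow m x).fderiv, real_inner_smul_left]

lemma gradient_inner_mul {g : E → ℝ} (hg : Differentiable ℝ g) (v x : E) :
    gradient (fun y ↦ ⟪v, y⟫_ℝ * g y) x = g x • v + ⟪v, x⟫_ℝ • gradient g x :=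
  ext_inner_right ℝ fun w ↦ by
    have hderiv : HasFDerivAt (fun y ↦ ⟪v, y⟫_ℝ * g y)
        (⟪v, x⟫_ℝ • fderiv ℝ g x + g x • innerSL ℝ v) x :=
      (innerSL ℝ v).hasFDerivAt.mul (hg x).hasFDerivAt
    simp [inner_gradient_left, hderiv.fderiv, inner_add_left, real_inner_smul_left, add_comm]

lemma laplacian_bracketPow (m : ℝ) (x : E) :
    (Δ (bracketPow m : E → ℝ)) x =
      m * (m - 2 + finrank ℝ E) * bracketPow (m - 2) x - m * (m - 2) * bracketPow (m - 4) x := by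
  have hsecond (v : E) : fderiv ℝ (fun y ↦ fderiv ℝ (bracketPow m) y v) x v =
      m * (m - 2) * bracketPow (m - 4) x * (⟪x, v⟫_ℝ * ⟪v, x⟫_ℝ) +
        m * bracketPow (m - 2) x * ‖v‖ ^ 2 := by
    have hfirst : (fun y ↦ fderiv ℝ (bracketPow m) y v) =
        fun y ↦ m * (⟪v, y⟫_ℝ * bracketPow (m - 2) y) := by
      ext1 y
      simp [(hasFDerivAt_bracketPow m y).fderiv, real_inner_comm v, mul_left_comm, mul_comm]
    have hderiv := ((innerSL ℝ v).hasFDerivAt.mul (hasFDerivAt_bracketPow (m - 2) x)).const_mul m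
    rw [hfirst]
    refine (DFunLike.congr_fun hderiv.fderiv v).trans ?_
    simp [real_inner_comm v, show m - 2 - 2 = m - 4 by ring]
    ring
  let b := stdOrthonormalBasis ℝ E
  rw [laplacian_eq_sum_fderiv_fderiv b (contDiff_bracketPow m)]
  simp only [hsecond, Finset.sum_add_distrib, ← Finset.mul_sum, b.sum_inner_mul_inner,
    b.norm_eq_one]
  have hsq := norm_sq_mul_bracketPow (m - 4) x
  rw [show m - 4 + 2 = m - 2 by ring] at hsq
  rw [real_inner_self_eq_norm_sq, mul_assoc _ _ (‖x‖ ^ 2), mul_comm _ (‖x‖ ^ 2), hsq]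
  simp
  ring

lemma laplacian_bracketPow_neg_two (x : E) :
    (Δ (bracketPow (-2) : E → ℝ)) x =
      -2 * (finrank ℝ E - 4) * bracketPow (-2) x ^ 2 - 8 * bracketPow (-2) x ^ 3 := by
  rw [laplacian_bracketPow, ← bracketPow_neg_four, ← bracketPow_neg_six,
    show (-2 - 2 : ℝ) = -4 by norm_num, show (-2 - 4 : ℝ) = -6 by norm_num]
  ring

lemma laplacian_inner_mul {g : E → ℝ} (hg : ContDiff ℝ 2 g) (v x : E) :
    (Δ fun y ↦ ⟪v, y⟫_ℝ * g y) x = ⟪v, x⟫_ℝ * (Δ g) x + 2 * ⟪v, gradient g x⟫_ℝ := by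
  have hlin : ContDiff ℝ 2 fun y ↦ ⟪v, y⟫_ℝ := (innerSL ℝ v).contDiff
  have hfderiv (y : E) : fderiv ℝ (fun y ↦ ⟪v, y⟫_ℝ) y = innerSL ℝ v := (innerSL ℝ v).fderiv
  have hgradient : gradient (fun y ↦ ⟪v, y⟫_ℝ) x = v :=
    ext_inner_right ℝ fun w ↦ by simp [inner_gradient_left, hfderiv]
  have hlaplacian : (Δ fun y ↦ ⟪v, y⟫_ℝ) x = 0 := by
    simp [laplacian_eq_sum_fderiv_fderiv (stdOrthonormalBasis ℝ E) hlin, hfderiv]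
  rw [laplacian_fun_mul hlin hg, hgradient, hlaplacian, mul_zero, add_zero]

end Gradients

section Bubble

open MvPolynomial InnerProductSpace Laplacian

variable {d : ℕ}

lemma uAT_eq_bracketPow : uAT d = bracketPow (2 - d) := by
  ext x
  rw [uAT, bracketPow]
  ring_nf

/-- The inverse stereographic projection of `ℝ^d` onto the unit sphere of `ℝ^d ⊕ ℝ`, in coordinates:
`none` is the coordinate along the axis of projection. -/
def invStereo : Option (Fin d) → EuclideanSpace ℝ (Fin d) → ℝ
  | none, x => 2 * bracketPow (-2) x - 1
  | some j, x => 2 * x j * bracketPow (-2) x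

lemma invStereo_some_eq_inner_mul (j : Fin d) :
    invStereo (some j) = fun x ↦ ⟪EuclideanSpace.single j 2, x⟫_ℝ * bracketPow (-2) x := by
  ext x
  simp [invStereo, EuclideanSpace.inner_single_left]

lemma isSymbol_invStereo (n : ℕ) (a : Option (Fin d)) : IsSymbol n 0 (invStereo a) := by
  have hs : IsSymbol n (-2) (bracketPow (-2) : EuclideanSpace ℝ (Fin d) → ℝ) := .bracketPow _
  cases a with
  | none => exact ((hs.mono (by norm_num)).const_mul 2).add (.const (-1))
  | some j =>
    rw [invStereo_some_eq_inner_mul]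
    exact ((IsSymbol.clm (innerSL ℝ (EuclideanSpace.single j 2))).mul hs).mono (by norm_num)

lemma contDiff_invStereo (a : Option (Fin d)) : ContDiff ℝ 2 (invStereo a) :=
  (isSymbol_invStereo 2 a).contDiff

lemma gradient_invStereo_none (x : EuclideanSpace ℝ (Fin d)) :
    gradient (invStereo none) x = (-4 * bracketPow (-2) x ^ 2) • x :=
  ext_inner_right ℝ fun v ↦ by
    have hderiv : HasFDerivAt (invStereo none) _ x :=
      ((hasFDerivAt_bracketPow (-2) x).const_mul 2).sub_const 1
    rw [inner_gradient_left, hderiv.fderiv, ← bracketPow_neg_four]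
    norm_num [real_inner_smul_left]
    ring

lemma gradient_invStereo_some (j : Fin d) (x : EuclideanSpace ℝ (Fin d)) :
    gradient (invStereo (some j)) x = (2 * bracketPow (-2) x) • EuclideanSpace.single j 1 -
      (4 * x j * bracketPow (-2) x ^ 2) • x := by
  rw [invStereo_some_eq_inner_mul, gradient_inner_mul
    ((contDiff_bracketPow (n := 1) _).differentiable one_ne_zero), gradient_bracketPow,
    show (-2 - 2 : ℝ) = -4 by norm_num, bracketPow_neg_four]
  ext i
  by_cases hij : i = j <;> simp [hij, EuclideanSpace.inner_single_left] <;> ring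

lemma inner_gradient_invStereo (a b : Option (Fin d)) (x : EuclideanSpace ℝ (Fin d)) :
    ⟪gradient (invStereo a) x, gradient (invStereo b) x⟫_ℝ =
      4 * bracketPow (-2) x ^ 2 * ((if a = b then 1 else 0) - invStereo a x * invStereo b x) := by
  have hnorm := bracketPow_neg_two_mul_norm_sq x
  rcases a with - | i <;> rcases b with - | j <;>
    simp only [gradient_invStereo_none, gradient_invStereo_some, inner_sub_left, inner_sub_right,
      real_inner_smul_left, real_inner_smul_right] <;>
    simp only [invStereo, EuclideanSpace.inner_single_left, EuclideanSpace.inner_single_right,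
      real_inner_self_eq_norm_sq, map_one, one_mul, conj_trivial, PiLp.single_apply,
      Option.some.injEq, reduceCtorEq, if_true, if_false] <;>
    set s := bracketPow (-2) x
  · linear_combination 16 * s ^ 3 * hnorm
  · linear_combination 16 * s ^ 3 * x j * hnorm
  · linear_combination 16 * s ^ 3 * x i * hnorm
  · rw [if_congr (eq_comm (a := j)) rfl rfl]
    linear_combination 16 * s ^ 3 * x i * x j * hnorm

lemma laplacian_uAT (x : EuclideanSpace ℝ (Fin d)) :
    (Δ (uAT d)) x = -(d * (d - 2)) * bracketPow (-2) x ^ 2 * uAT d x := by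
  rw [uAT_eq_bracketPow, laplacian_bracketPow, finrank_euclideanSpace_fin, ← bracketPow_neg_four,
    mul_assoc _ (bracketPow _ x), bracketPow_mul_bracketPow,
    show -4 + (2 - d : ℝ) = 2 - d - 4 by ring]
  ring

lemma laplacian_invStereo_none (x : EuclideanSpace ℝ (Fin d)) :
    (Δ (invStereo none)) x = -4 * (d - 4) * bracketPow (-2) x ^ 2 - 16 * bracketPow (-2) x ^ 3 := by
  have hs : ContDiff ℝ 2 (bracketPow (-2) : EuclideanSpace ℝ (Fin d) → ℝ) := contDiff_bracketPow _
  have hsub : invStereo none =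
      (2 : ℝ) • bracketPow (-2) - fun _ : EuclideanSpace ℝ (Fin d) ↦ 1 := rfl
  have hsmul : ContDiff ℝ 2 ((2 : ℝ) • (bracketPow (-2) : EuclideanSpace ℝ (Fin d) → ℝ)) :=
    contDiff_const.smul hs
  rw [hsub, hsmul.contDiffAt.laplacian_sub contDiffAt_const,
    laplacian_smul _ hs.contDiffAt, laplacian_const, laplacian_bracketPow_neg_two,
    finrank_euclideanSpace_fin]
  simp only [smul_eq_mul, Pi.zero_apply]
  ring

lemma laplacian_invStereo_some (j : Fin d) (x : EuclideanSpace ℝ (Fin d)) :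
    (Δ (invStereo (some j))) x =
      -4 * x j * ((d - 2) * bracketPow (-2) x ^ 2 + 4 * bracketPow (-2) x ^ 3) := by
  rw [invStereo_some_eq_inner_mul, laplacian_inner_mul (contDiff_bracketPow _),
    laplacian_bracketPow_neg_two, gradient_bracketPow, show (-2 - 2 : ℝ) = -4 by norm_num,
    bracketPow_neg_four, real_inner_smul_right, EuclideanSpace.inner_single_left,
    finrank_euclideanSpace_fin]
  simp only [conj_trivial]
  ring

lemma gradient_uAT (x : EuclideanSpace ℝ (Fin d)) :
    gradient (uAT d) x = ((2 - d) * bracketPow (-2) x * uAT d x) • x := by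
  rw [uAT_eq_bracketPow, gradient_bracketPow, mul_assoc, bracketPow_mul_bracketPow, neg_add_eq_sub]

lemma uAT_mul_laplacian_invStereo_add (a : Option (Fin d)) (x : EuclideanSpace ℝ (Fin d)) :
    uAT d x * (Δ (invStereo a)) x + 2 * ⟪gradient (uAT d) x, gradient (invStereo a) x⟫_ℝ =
      -(4 * d) * bracketPow (-2) x ^ 2 * uAT d x * invStereo a x := by
  have hnorm := bracketPow_neg_two_mul_norm_sq x
  set s := bracketPow (-2) x
  cases a with
  | none =>
    rw [laplacian_invStereo_none, gradient_uAT, gradient_invStereo_none, real_inner_smul_left,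
      real_inner_smul_right, real_inner_self_eq_norm_sq, invStereo]
    linear_combination 8 * (d - 2) * s ^ 2 * uAT d x * hnorm
  | some j =>
    rw [laplacian_invStereo_some, gradient_uAT, gradient_invStereo_some, real_inner_smul_left,
      inner_sub_right, real_inner_smul_right, real_inner_smul_right, real_inner_self_eq_norm_sq,
      EuclideanSpace.inner_single_right, conj_trivial, one_mul, invStereo]
    linear_combination 8 * (d - 2) * s ^ 2 * uAT d x * x j * hnorm

/-- The function `u⋆ · p(ω)` on `ℝ^d`, the image of a polynomial `p` on the sphere under the
conformal transplantation by the stereographic projection. -/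
def bubblePoly (p : MvPolynomial (Option (Fin d)) ℝ) (x : EuclideanSpace ℝ (Fin d)) : ℝ :=
  uAT d x * eval (fun a ↦ invStereo a x) p

lemma isSymbol_bubblePoly (n : ℕ) (p : MvPolynomial (Option (Fin d)) ℝ) :
    IsSymbol n (2 - d) (bubblePoly p) := by
  have hu : IsSymbol n (2 - d) (uAT d) := uAT_eq_bracketPow (d := d) ▸ .bracketPow _
  simpa only [add_zero] using! hu.mul (.eval (isSymbol_invStereo n) p)

theorem laplacian_bubblePoly (p : MvPolynomial (Option (Fin d)) ℝ)
    (x : EuclideanSpace ℝ (Fin d)) :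
    (Δ (bubblePoly p)) x = -(bracketPow (-4) x * bubblePoly (bubbleOp (d : ℝ) p) x) := by
  have hu : ContDiff ℝ 2 (uAT d) := uAT_eq_bracketPow (d := d) ▸ contDiff_bracketPow _
  have hmixed : ∑ a, ∑ b, eval (fun a ↦ invStereo a x) (pderiv b (pderiv a p)) *
      ⟪gradient (invStereo b) x, gradient (invStereo a) x⟫_ℝ =
      4 * bracketPow (-2) x ^ 2 *
        eval (fun a ↦ invStereo a x) (polyLaplacian p - (eulerOp (eulerOp p) - eulerOp p)) := by
    simp only [inner_gradient_invStereo, eulerOp_eulerOp_sub, polyLaplacian_apply, mul_sub,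
      Finset.mul_sum, Finset.sum_sub_distrib, map_sub, map_sum, map_mul, eval_X, mul_ite, mul_one,
      mul_zero, Finset.sum_ite_eq', Finset.mem_univ, if_true]
    exact congrArg₂ _ (Finset.sum_congr rfl fun a _ ↦ mul_comm ..) <|
      Finset.sum_congr rfl fun a _ ↦ Finset.sum_congr rfl fun b _ ↦ by ring
  have hfirst : ∑ a, eval (fun a ↦ invStereo a x) (pderiv a p) * (uAT d x * (Δ (invStereo a)) x +
      2 * ⟪gradient (uAT d) x, gradient (invStereo a) x⟫_ℝ) =
      -(4 * d) * bracketPow (-2) x ^ 2 * uAT d x * eval (fun a ↦ invStereo a x) (eulerOp p) := by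
    simp only [uAT_mul_laplacian_invStereo_add, eulerOp_apply, Finset.mul_sum, map_sum, map_mul,
      eval_X]
    exact Finset.sum_congr rfl fun a _ ↦ by ring
  unfold bubblePoly
  rw [laplacian_mul_eval hu contDiff_invStereo, hmixed, hfirst, laplacian_uAT, bubbleOp_apply,
    bracketPow_neg_four]
  simp only [map_sub, map_add, smul_eval]
  ring

end Bubble

/-! ### The Green function -/

section Green

open Asymptotics Module InnerProductSpace Laplacian Filter Topology Set

lemma integrable_of_tendsto_of_tendsto_integral {α : Type*} [MeasurableSpace α] {μ : Measure α}
    {G : ℕ → α → ℝ} {f : α → ℝ} {a : ℝ} (hG : ∀ n, Integrable (G n) μ) (hG0 : ∀ n, 0 ≤ᵐ[μ] G n)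
    (hlim : ∀ᵐ x ∂μ, Tendsto (fun n ↦ G n x) atTop (𝓝 (f x)))
    (hintegral : Tendsto (fun n ↦ ∫ x, G n x ∂μ) atTop (𝓝 a)) : Integrable f μ := by
  have hG1 (n : ℕ) : eLpNorm (G n) 1 μ = ENNReal.ofReal (∫ x, G n x ∂μ) := by
    rw [eLpNorm_one_eq_lintegral_enorm, ← ofReal_integral_norm_eq_lintegral_enorm (hG n)]
    congr 1
    exact integral_congr_ae ((hG0 n).mono fun x hx ↦ norm_of_nonneg hx)
  have hfatou : eLpNorm f 1 μ ≤ ENNReal.ofReal a := by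
    rw [← ((ENNReal.continuous_ofReal.tendsto a).comp hintegral).liminf_eq]
    refine (Lp.eLpNorm_lim_le_liminf_eLpNorm
      (fun n ↦ (hG n).aestronglyMeasurable) f hlim).trans_eq ?_
    simp only [hG1, Function.comp_def]
  exact memLp_one_iff_integrable.1 ⟨aestronglyMeasurable_of_tendsto_ae _
    (fun n ↦ (hG n).aestronglyMeasurable) hlim, hfatou.trans_lt ENNReal.ofReal_lt_top⟩

lemma pow_mul_bracketPow_neg (n : ℕ) {r : ℝ} (hr : 0 < r) :
    r ^ n * bracketPow (-n) r = bracketPow (-n) r⁻¹ := by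
  have hinv : 1 + ‖r⁻¹‖ ^ 2 = (r ^ 2)⁻¹ * (1 + ‖r‖ ^ 2) := by
    simp only [norm_eq_abs, sq_abs]
    field_simp
    ring
  have hpow : ((r ^ 2)⁻¹ : ℝ) ^ (-n / 2 : ℝ) = r ^ n := by
    rw [inv_rpow (by positivity), ← rpow_neg (by positivity), ← rpow_natCast_mul hr.le,
      ← rpow_natCast r n]
    congr 1
    push_cast
    ring
  rw [bracketPow, bracketPow, hinv, mul_rpow (by positivity) (by positivity), hpow]

lemma hasDerivAt_pow_mul_bracketPow_neg {n : ℕ} (hn : n ≠ 0) (r : ℝ) :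
    HasDerivAt (fun r : ℝ ↦ r ^ n * bracketPow (-n) r / n)
      (r ^ (n - 1) * bracketPow (-(n + 2)) r) r := by
  have hn' : (n : ℝ) ≠ 0 := by exact_mod_cast hn
  have hderiv := ((hasDerivAt_pow n r).mul
    (hasFDerivAt_bracketPow (-n : ℝ) r).hasDerivAt).div_const (n : ℝ)
  refine hderiv.congr_deriv ?_
  have hsq := norm_sq_mul_bracketPow (-(n + 2) : ℝ) r
  rw [show -(n + 2) + 2 = -(n : ℝ) by ring, norm_eq_abs, sq_abs] at hsq
  have hpow : r ^ n * r = r ^ (n - 1) * r ^ 2 := by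
    rw [← pow_succ, ← pow_add, show n + 1 = n - 1 + 2 by omega]
  simp only [smul_apply, innerSL_apply_apply, smul_eq_mul, inner_apply,
    show -(n : ℝ) - 2 = -(n + 2) by ring]
  rw [div_eq_iff hn']
  linear_combination (-n * bracketPow (-(n + 2) : ℝ) r) * hpow - n * r ^ (n - 1) * hsq

lemma integral_Ioi_pow_mul_bracketPow {n : ℕ} (hn : n ≠ 0) :
    ∫ r in Ioi (0 : ℝ), r ^ (n - 1) * bracketPow (-(n + 2)) r = 1 / n := by
  have hlim : Tendsto (fun r : ℝ ↦ r ^ n * bracketPow (-n) r / n) atTop (𝓝 (1 / n)) := by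
    have hinv : Tendsto (fun r : ℝ ↦ bracketPow (-n) r⁻¹) atTop (𝓝 (bracketPow (-n) (0 : ℝ))) :=
      ((continuous_bracketPow (E := ℝ) _).tendsto 0).comp tendsto_inv_atTop_zero
    rw [show bracketPow (-n) (0 : ℝ) = 1 by simp [bracketPow]] at hinv
    refine (hinv.congr' ?_).div_const _
    filter_upwards [eventually_gt_atTop 0] with r hr using (pow_mul_bracketPow_neg n hr).symm
  rw [integral_Ioi_of_hasDerivAt_of_nonneg'
    (fun r _ ↦ hasDerivAt_pow_mul_bracketPow_neg hn r) ?_ hlim]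
  · simp [hn]
  · exact fun r hr ↦ mul_nonneg (pow_nonneg (mem_Ioi.1 hr).le _) (bracketPow_pos _ _).le

lemma laplacian_comp_smul_sub {E : Type*} [NormedAddCommGroup E] [InnerProductSpace ℝ E]
    [FiniteDimensional ℝ E] {f : E → ℝ} (hf : ContDiff ℝ 2 f) (c : ℝ) (x₀ x : E) :
    (Δ fun y ↦ f (c • (y - x₀))) x = c ^ 2 * (Δ f) (c • (x - x₀)) := by
  simp [laplacian_eq_iteratedFDeriv_stdOrthonormalBasis, iteratedFDeriv_comp_smul_sub hf,
    Finset.mul_sum]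

lemma integral_mul_comp_smul_sub {E : Type*} [NormedAddCommGroup E] [NormedSpace ℝ E]
    [FiniteDimensional ℝ E] [MeasurableSpace E] [BorelSpace E] (μ : Measure E) [μ.IsAddHaarMeasure]
    (f g : E → ℝ) (x : E) {c : ℝ} (hc : c ≠ 0) :
    ∫ y, f y * g (c • (y - x)) ∂μ =
      |(c ^ finrank ℝ E)⁻¹| * ∫ z, f (x + c⁻¹ • z) * g z ∂μ := by
  rw [← smul_eq_mul, ← Measure.integral_comp_smul,
    ← integral_add_right_eq_self (fun y ↦ f y * g (c • (y - x))) x]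
  simp only [add_sub_cancel_right, inv_smul_smul₀ hc, add_comm x]

lemma tendsto_integral_comp_sub_smul_mul {E : Type*} [NormedAddCommGroup E] [NormedSpace ℝ E]
    [MeasurableSpace E] [BorelSpace E] {μ : Measure E} {f g : E → ℝ} (hf : Continuous f)
    (hfb : f =O[⊤] fun _ ↦ (1 : ℝ)) (hg : Integrable g μ) (x : E) :
    Tendsto (fun ε : ℝ ↦ ∫ z, f (x - ε • z) * g z ∂μ) (𝓝 0) (𝓝 (f x * ∫ z, g z ∂μ)) := by
  obtain ⟨C, hC⟩ := isBigO_top.1 hfb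
  rw [← integral_const_mul]
  refine tendsto_integral_filter_of_dominated_convergence (fun z ↦ C * ‖g z‖)
    (.of_forall fun ε ↦ ?_) (.of_forall fun ε ↦ .of_forall fun z ↦ ?_) (hg.norm.const_mul C)
    (.of_forall fun z ↦ ?_)
  · exact (show Continuous fun z ↦ f (x - ε • z) by fun_prop).aestronglyMeasurable.mul
      hg.aestronglyMeasurable
  · rw [norm_mul]
    gcongr
    simpa using hC (x - ε • z)
  · have hcont : Continuous fun ε : ℝ ↦ f (x - ε • z) * g z := by fun_prop
    simpa using hcont.tendsto 0

variable {d : ℕ}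

lemma sphereArea_pos (hd : d ≠ 0) : 0 < sphereArea d := by
  have : 0 < Gamma ((d : ℝ) / 2) := Gamma_pos_of_pos (by positivity)
  unfold sphereArea
  positivity

lemma integral_bracketPow_neg_add_two (hd : d ≠ 0) :
    ∫ x : EuclideanSpace ℝ (Fin d), bracketPow (-(d + 2)) x = sphereArea d / d := by
  have : NeZero d := ⟨hd⟩
  have : 0 < Gamma ((d : ℝ) / 2) := Gamma_pos_of_pos (by positivity)
  have hπ : √π ^ d = π ^ ((d : ℝ) / 2) := by
    rw [sqrt_eq_rpow, ← rpow_mul_natCast pi_pos.le, one_div_mul_eq_div]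
  have hpolar := integral_fun_norm_addHaar (volume : Measure (EuclideanSpace ℝ (Fin d)))
    (bracketPow (-(d + 2)))
  simp only [finrank_euclideanSpace_fin, smul_eq_mul, integral_Ioi_pow_mul_bracketPow hd] at hpolar
  simp only [bracketPow, norm_norm] at hpolar ⊢
  rw [hpolar, Measure.real, EuclideanSpace.volume_ball, Fintype.card_fin, hπ,
    Gamma_add_one (by positivity), ENNReal.ofReal_one, one_pow, one_mul,
    ENNReal.toReal_ofReal (by positivity), nsmul_eq_mul, sphereArea]
  field_simp

/-- The Green function with its singularity smoothed out at scale `ε`. For `ε = 0` it is the Green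
function itself, and for `ε > 0` it is a multiple of a dilated Aubin–Talenti function. -/
def smoothedGreen (d : ℕ) (ε : ℝ) (x : EuclideanSpace ℝ (Fin d)) : ℝ :=
  (ε ^ 2 + ‖x‖ ^ 2) ^ ((2 - d : ℝ) / 2) / ((d - 2) * sphereArea d)

lemma smoothedGreen_zero : smoothedGreen d 0 = greenKernel d := by
  ext x
  rw [smoothedGreen, greenKernel, zero_pow two_ne_zero, zero_add,
    ← rpow_natCast_mul (norm_nonneg x)]
  congr 2
  push_cast
  ring

lemma smoothedGreen_eq_mul_uAT {ε : ℝ} (hε : 0 < ε) (x : EuclideanSpace ℝ (Fin d)) :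
    smoothedGreen d ε x = ε ^ (2 - d : ℝ) / ((d - 2) * sphereArea d) * uAT d (ε⁻¹ • x) := by
  have hscale : ε ^ 2 + ‖x‖ ^ 2 = ε ^ 2 * (1 + ‖ε⁻¹ • x‖ ^ 2) := by
    rw [norm_smul, norm_inv, norm_of_nonneg hε.le]
    field_simp
  have hpow : (ε ^ 2) ^ ((2 - d : ℝ) / 2) = ε ^ (2 - d : ℝ) := by
    rw [← rpow_natCast_mul hε.le]
    congr 1
    push_cast
    ring
  rw [smoothedGreen, hscale, mul_rpow (by positivity) (by positivity), hpow, uAT_eq_bracketPow,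
    bracketPow, div_mul_eq_mul_div]

lemma continuous_uAT : Continuous (uAT d) := uAT_eq_bracketPow (d := d) ▸ continuous_bracketPow _

lemma continuousAt_smoothedGreen {x : EuclideanSpace ℝ (Fin d)} (hx : x ≠ 0) :
    ContinuousAt (fun ε ↦ smoothedGreen d ε x) 0 := by
  have : 0 < ‖x‖ := norm_pos_iff.2 hx
  exact ContinuousAt.div_const (ContinuousAt.rpow_const (by fun_prop)
    (Or.inl (by positivity))) _

lemma smoothedGreen_nonneg (hd : 2 ≤ d) (ε : ℝ) (x : EuclideanSpace ℝ (Fin d)) :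
    0 ≤ smoothedGreen d ε x := by
  have hd' : (0 : ℝ) ≤ d - 2 := sub_nonneg.2 (by exact_mod_cast hd)
  have hA := sphereArea_pos (show d ≠ 0 by omega)
  unfold smoothedGreen
  positivity

lemma greenKernel_nonneg (hd : 2 ≤ d) (x : EuclideanSpace ℝ (Fin d)) : 0 ≤ greenKernel d x :=
  smoothedGreen_zero (d := d) ▸ smoothedGreen_nonneg hd 0 x

lemma smoothedGreen_le_greenKernel (hd : 2 ≤ d) (ε : ℝ) {x : EuclideanSpace ℝ (Fin d)}
    (hx : x ≠ 0) : smoothedGreen d ε x ≤ greenKernel d x := by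
  have : 0 < ‖x‖ := norm_pos_iff.2 hx
  have hd' : (2 : ℝ) ≤ d := by exact_mod_cast hd
  have hA := sphereArea_pos (show d ≠ 0 by omega)
  rw [← smoothedGreen_zero]
  unfold smoothedGreen
  refine div_le_div_of_nonneg_right (rpow_le_rpow_of_nonpos (by positivity) ?_ (by linarith))
    (mul_nonneg (by linarith) hA.le)
  nlinarith [sq_nonneg ε]

lemma laplacian_uAT_eq_bracketPow (x : EuclideanSpace ℝ (Fin d)) :
    (Δ (uAT d)) x = -(d * (d - 2)) * bracketPow (-(d + 2)) x := by
  rw [laplacian_uAT, ← bracketPow_neg_four, uAT_eq_bracketPow, mul_assoc, bracketPow_mul_bracketPow]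
  ring_nf

variable {φ : EuclideanSpace ℝ (Fin d) → ℝ}

lemma integral_smoothedGreen_mul_neg_laplacian (hd : 2 < d) (hφ : IsSymbol 2 (2 - d) φ)
    {ε : ℝ} (hε : 0 < ε) (x : EuclideanSpace ℝ (Fin d)) :
    ∫ y, smoothedGreen d ε (x - y) * -(Δ φ) y =
      d / sphereArea d * ∫ z, φ (x - ε • z) * bracketPow (-(d + 2)) z := by
  have hd' : (2 : ℝ) < d := by exact_mod_cast hd
  have hA := (sphereArea_pos (show d ≠ 0 by omega)).ne'
  have hd2 : (d - 2 : ℝ) ≠ 0 := by linarith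
  have hc : -ε⁻¹ ≠ 0 := neg_ne_zero.2 (inv_ne_zero hε.ne')
  have hu : IsSymbol 2 (2 - d) (uAT d) := uAT_eq_bracketPow (d := d) ▸ .bracketPow _
  have hgreen (y : EuclideanSpace ℝ (Fin d)) : smoothedGreen d ε (x - y) * -(Δ φ) y =
      -(ε ^ (2 - d : ℝ) / ((d - 2) * sphereArea d)) *
        (uAT d (-ε⁻¹ • (y - x)) * (Δ φ) y) := by
    rw [smoothedGreen_eq_mul_uAT hε, neg_smul, ← smul_neg, neg_sub]
    ring
  have hlap (y : EuclideanSpace ℝ (Fin d)) : φ y * (Δ fun z ↦ uAT d (-ε⁻¹ • (z - x))) y =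
      -(d * (d - 2)) * (ε ^ 2)⁻¹ * (φ y * bracketPow (-(d + 2)) (-ε⁻¹ • (y - x))) := by
    rw [laplacian_comp_smul_sub hu.contDiff, laplacian_uAT_eq_bracketPow]
    ring
  simp only [hgreen]
  rw [integral_const_mul, (hu.comp_smul_sub (by linarith) x hc).integral_mul_laplacian_comm hφ
    (by rw [finrank_euclideanSpace_fin]; linarith)]
  simp only [hlap]
  rw [integral_const_mul, integral_mul_comp_smul_sub _ _ _ _ hc]
  simp only [inv_neg, inv_inv, neg_smul, ← sub_eq_add_neg, finrank_euclideanSpace_fin, abs_inv,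
    abs_pow, abs_neg, abs_of_pos hε, inv_pow]
  rw [rpow_sub hε, rpow_natCast, rpow_two]
  field_simp

lemma tendsto_integral_smoothedGreen_mul_neg_laplacian (hd : 2 < d) (hφ : IsSymbol 2 (2 - d) φ)
    (x : EuclideanSpace ℝ (Fin d)) :
    Tendsto (fun ε ↦ ∫ y, smoothedGreen d ε (x - y) * -(Δ φ) y) (𝓝[>] 0) (𝓝 (φ x)) := by
  have hd' : (2 : ℝ) < d := by exact_mod_cast hd
  have hA := (sphereArea_pos (show d ≠ 0 by omega)).ne'
  have hbdd : φ =O[⊤] fun _ ↦ (1 : ℝ) :=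
    (hφ.mono (b := 0) (by linarith)).isBigO.congr_right bracketPow_zero
  have hlim := (tendsto_integral_comp_sub_smul_mul (μ := volume) hφ.contDiff.continuous hbdd
    (integrable_bracketPow (m := -(d + 2))
      (by rw [finrank_euclideanSpace_fin]; linarith)) x).const_mul (d / sphereArea d)
  rw [integral_bracketPow_neg_add_two (by omega), show d / sphereArea d *
    (φ x * (sphereArea d / d)) = φ x by field_simp] at hlim
  refine (hlim.mono_left nhdsWithin_le_nhds).congr' ?_
  filter_upwards [self_mem_nhdsWithin] with ε hε
    using (integral_smoothedGreen_mul_neg_laplacian hd hφ hε x).symm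

lemma ae_sub_ne_zero (hd : d ≠ 0) (x : EuclideanSpace ℝ (Fin d)) : ∀ᵐ y, x - y ≠ 0 := by
  have : NeZero d := ⟨hd⟩
  filter_upwards [volume.ae_ne x] with y hy using sub_ne_zero.2 hy.symm

lemma continuous_smoothedGreen {ε : ℝ} (hε : 0 < ε) : Continuous (smoothedGreen d ε) :=
  .div_const (.rpow_const (by fun_prop) fun x ↦ Or.inl (by positivity)) _

lemma integrable_smoothedGreen_mul_bracketPow (hd : 2 < d) {ε : ℝ} (hε : 0 < ε)
    (x : EuclideanSpace ℝ (Fin d)) :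
    Integrable fun y ↦ smoothedGreen d ε (x - y) * bracketPow (-(d + 2)) y := by
  have hd' : (2 : ℝ) < d := by exact_mod_cast hd
  have hsmoothed : (fun y ↦ smoothedGreen d ε (x - y)) =O[⊤]
      (bracketPow (2 - d) : EuclideanSpace ℝ (Fin d) → ℝ) := by
    have hbracket := bracketPow_comp_smul_sub_isBigO (m := (2 - d : ℝ)) (by linarith) x
      (neg_ne_zero.2 (inv_ne_zero hε.ne'))
    refine (hbracket.const_mul_left (ε ^ (2 - d : ℝ) / ((d - 2) * sphereArea d))).congr_left
      fun y ↦ ?_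
    rw [smoothedGreen_eq_mul_uAT hε, uAT_eq_bracketPow, neg_smul, ← smul_neg, neg_sub]
  refine integrable_of_isBigO_bracketPow (isBigO_bracketPow_mul hsmoothed (isBigO_refl _ _))
    (Continuous.aestronglyMeasurable ?_) (by rw [finrank_euclideanSpace_fin]; linarith)
  exact ((continuous_smoothedGreen hε).comp (continuous_const.sub continuous_id)).mul
    (continuous_bracketPow _)

lemma integrable_greenKernel_mul_bracketPow (hd : 2 < d) (x : EuclideanSpace ℝ (Fin d)) :
    Integrable fun y ↦ greenKernel d (x - y) * bracketPow (-(d + 2)) y := by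
  have hd' : (2 : ℝ) < d := by exact_mod_cast hd
  have hu : IsSymbol 2 (2 - d) (uAT d) := uAT_eq_bracketPow (d := d) ▸ .bracketPow _
  obtain ⟨ε, -, hε, hε0⟩ := exists_seq_strictAnti_tendsto (0 : ℝ)
  have hε0' : Tendsto ε atTop (𝓝[>] 0) := tendsto_nhdsWithin_iff.2 ⟨hε0, .of_forall hε⟩
  refine integrable_of_tendsto_of_tendsto_integral
    (fun n ↦ integrable_smoothedGreen_mul_bracketPow hd (hε n) x)
    (fun n ↦ .of_forall fun y ↦
      mul_nonneg (smoothedGreen_nonneg hd.le _ _) (bracketPow_pos _ _).le) ?_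
    (a := (d * (d - 2) : ℝ)⁻¹ * uAT d x) ?_
  · filter_upwards [ae_sub_ne_zero (by omega) x] with y hy
    rw [← smoothedGreen_zero]
    exact ((continuousAt_smoothedGreen hy).tendsto.comp hε0).mul_const _
  · have hlim := (tendsto_integral_smoothedGreen_mul_neg_laplacian hd hu x).comp hε0'
    refine (hlim.const_mul (d * (d - 2) : ℝ)⁻¹).congr fun n ↦ ?_
    rw [Function.comp_apply, ← integral_const_mul]
    refine integral_congr_ae (.of_forall fun y ↦ ?_)
    have hd2 : (d - 2 : ℝ) ≠ 0 := by linarith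
    simp only [laplacian_uAT_eq_bracketPow]
    field_simp

theorem invLap_neg_laplacian (hd : 2 < d) (hφ : IsSymbol 2 (2 - d) φ)
    (hφ' : Δ φ =O[⊤] (bracketPow (-(d + 2)) : EuclideanSpace ℝ (Fin d) → ℝ))
    (x : EuclideanSpace ℝ (Fin d)) : invLap d (fun y ↦ -(Δ φ) y) x = φ x := by
  obtain ⟨C, hC⟩ := isBigO_top.1 hφ'
  refine tendsto_nhds_unique ?_ (tendsto_integral_smoothedGreen_mul_neg_laplacian hd hφ x)
  refine tendsto_integral_filter_of_dominated_convergence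
    (fun y ↦ C * (greenKernel d (x - y) * bracketPow (-(d + 2)) y)) ?_ ?_
    ((integrable_greenKernel_mul_bracketPow hd x).const_mul C) ?_
  · filter_upwards [self_mem_nhdsWithin] with ε hε
    exact (((continuous_smoothedGreen hε).comp (continuous_const.sub continuous_id)).mul
      (continuous_laplacian hφ.contDiff).neg).aestronglyMeasurable
  · refine .of_forall fun ε ↦ ?_
    filter_upwards [ae_sub_ne_zero (by omega) x] with y hy
    rw [norm_mul, norm_of_nonneg (smoothedGreen_nonneg hd.le _ _), norm_neg, mul_left_comm]
    refine mul_le_mul (smoothedGreen_le_greenKernel hd.le ε hy) ?_ (norm_nonneg _)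
      (greenKernel_nonneg hd.le _)
    simpa only [norm_bracketPow] using hC y
  · filter_upwards [ae_sub_ne_zero (by omega) x] with y hy
    rw [← smoothedGreen_zero]
    exact ((continuousAt_smoothedGreen hy).tendsto.mono_left nhdsWithin_le_nhds).mul_const _

end Green

/-! ### The Schur test -/

section Schur

variable {α : Type*} [MeasurableSpace α] {μ : Measure α} {K : α → α → ℝ} {u : α → ℝ} {c : ℝ}

/-- The hypotheses of the symmetric Schur test: `K` is a nonnegative symmetric kernel with the
positive eigenfunction `u`, of eigenvalue `c`, on `L²(μ)`. -/
structure IsSchurKernel (μ : Measure α) (K : α → α → ℝ) (u : α → ℝ) (c : ℝ) : Prop where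
  measurable : Measurable (Function.uncurry K)
  nonneg (x y : α) : 0 ≤ K x y
  symm (x y : α) : K x y = K y x
  measurable_weight : Measurable u
  weight_pos (x : α) : 0 < u x
  integrable (x : α) : Integrable (fun y ↦ K x y * u y) μ
  integral_eq (x : α) : ∫ y, K x y * u y ∂μ = c * u x

/-- The bilinear form `∬ f(x) K(x, y) g(y) dμ(x) dμ(y)` of the kernel `K`. -/
def kernelForm (μ : Measure α) (K : α → α → ℝ) (f g : α → ℝ) : ℝ :=
  ∫ z, f z.1 * K z.1 z.2 * g z.2 ∂μ.prod μ

namespace IsSchurKernel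

variable {f g : α → ℝ}

lemma norm_mul_mul_le (hK : IsSchurKernel μ K u c) (z : α × α) :
    ‖f z.1 * K z.1 z.2 * g z.2‖ ≤ (K z.1 z.2 * u z.2 * (f z.1 ^ 2 / u z.1) +
      K z.swap.1 z.swap.2 * u z.swap.2 * (g z.swap.1 ^ 2 / u z.swap.1)) / 2 := by
  obtain ⟨x, y⟩ := z
  have hx := hK.weight_pos x
  have hy := hK.weight_pos y
  have hamgm : 2 * (|f x| * |g y|) ≤ u y * (f x ^ 2 / u x) + u x * (g y ^ 2 / u y) := by
    have hsq : u y * (f x ^ 2 / u x) + u x * (g y ^ 2 / u y) - 2 * (|f x| * |g y|) =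
        (u y * |f x| - u x * |g y|) ^ 2 / (u x * u y) := by
      rw [← sq_abs (f x), ← sq_abs (g y)]
      field_simp
      ring
    have : 0 ≤ (u y * |f x| - u x * |g y|) ^ 2 / (u x * u y) := by positivity
    linarith
  simp only [Prod.fst_swap, Prod.snd_swap, norm_mul, norm_eq_abs, abs_of_nonneg (hK.nonneg x y),
    hK.symm y x]
  nlinarith [mul_le_mul_of_nonneg_left hamgm (hK.nonneg x y)]

variable [SFinite μ]

lemma integrable_sq_mul (hK : IsSchurKernel μ K u c) (hf : MemLp f 2 μ) :
    Integrable (fun z : α × α ↦ K z.1 z.2 * u z.2 * (f z.1 ^ 2 / u z.1)) (μ.prod μ) := by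
  have hmeas : AEStronglyMeasurable (fun z : α × α ↦ K z.1 z.2 * u z.2 * (f z.1 ^ 2 / u z.1))
      (μ.prod μ) :=
    (hK.measurable.mul (hK.measurable_weight.comp measurable_snd)).aestronglyMeasurable.mul
      ((hf.aestronglyMeasurable.comp_fst.pow 2).div₀
        (hK.measurable_weight.comp measurable_fst).aestronglyMeasurable)
  refine (integrable_prod_iff hmeas).2 ⟨.of_forall fun x ↦
    (hK.integrable x).mul_const (f x ^ 2 / u x), ?_⟩
  refine (hf.integrable_sq.const_mul c).congr (.of_forall fun x ↦ ?_)
  have hnonneg (y : α) : 0 ≤ K x y * u y * (f x ^ 2 / u x) :=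
    mul_nonneg (mul_nonneg (hK.nonneg x y) (hK.weight_pos y).le)
      (div_nonneg (sq_nonneg _) (hK.weight_pos x).le)
  have hux := (hK.weight_pos x).ne'
  simp only [norm_of_nonneg (hnonneg _), integral_mul_const, hK.integral_eq]
  field_simp

lemma integral_sq_mul (hK : IsSchurKernel μ K u c) (hf : MemLp f 2 μ) :
    ∫ z : α × α, K z.1 z.2 * u z.2 * (f z.1 ^ 2 / u z.1) ∂μ.prod μ = c * ∫ x, f x ^ 2 ∂μ := by
  rw [integral_prod _ (hK.integrable_sq_mul hf), ← integral_const_mul]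
  refine integral_congr_ae (.of_forall fun x ↦ ?_)
  have hux := (hK.weight_pos x).ne'
  simp only [integral_mul_const, hK.integral_eq]
  field_simp

lemma integrable_mul_mul (hK : IsSchurKernel μ K u c) (hf : MemLp f 2 μ) (hg : MemLp g 2 μ) :
    Integrable (fun z : α × α ↦ f z.1 * K z.1 z.2 * g z.2) (μ.prod μ) :=
  (((hK.integrable_sq_mul hf).add (hK.integrable_sq_mul hg).swap).div_const 2).mono'
    ((hf.aestronglyMeasurable.comp_fst.mul hK.measurable.aestronglyMeasurable).mul
      hg.aestronglyMeasurable.comp_snd)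
    (.of_forall hK.norm_mul_mul_le)

lemma kernelForm_self_le (hK : IsSchurKernel μ K u c) (hf : MemLp f 2 μ) :
    kernelForm μ K f f ≤ c * ∫ x, f x ^ 2 ∂μ := by
  have hsq := hK.integrable_sq_mul hf
  have hswap : Integrable (fun z : α × α ↦ K z.swap.1 z.swap.2 * u z.swap.2 *
      (f z.swap.1 ^ 2 / u z.swap.1)) (μ.prod μ) := hsq.swap
  calc kernelForm μ K f f
      ≤ ∫ z, (K z.1 z.2 * u z.2 * (f z.1 ^ 2 / u z.1) +
          K z.swap.1 z.swap.2 * u z.swap.2 * (f z.swap.1 ^ 2 / u z.swap.1)) / 2 ∂μ.prod μ :=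
        integral_mono (hK.integrable_mul_mul hf hf) ((hsq.add hswap).div_const 2)
          fun z ↦ (le_norm_self _).trans (hK.norm_mul_mul_le z)
    _ = c * ∫ x, f x ^ 2 ∂μ := by
        rw [integral_div, integral_add hsq hswap, integral_prod_swap
          (fun z : α × α ↦ K z.1 z.2 * u z.2 * (f z.1 ^ 2 / u z.1)), hK.integral_sq_mul hf]
        ring

lemma kernelForm_eq_integral (hK : IsSchurKernel μ K u c) (hf : MemLp f 2 μ) (hg : MemLp g 2 μ) :
    kernelForm μ K f g = ∫ x, f x * ∫ y, K x y * g y ∂μ ∂μ := by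
  rw [kernelForm, integral_prod _ (hK.integrable_mul_mul hf hg)]
  simp only [mul_assoc, integral_const_mul]

lemma kernelForm_comm (hK : IsSchurKernel μ K u c) (f g : α → ℝ) :
    kernelForm μ K f g = kernelForm μ K g f := by
  rw [kernelForm, kernelForm, ← integral_prod_swap]
  refine integral_congr_ae (.of_forall fun z ↦ ?_)
  simp only [Prod.fst_swap, Prod.snd_swap, hK.symm z.2 z.1]
  ring

lemma kernelForm_add_left (hK : IsSchurKernel μ K u c) {f' : α → ℝ} (hf : MemLp f 2 μ)
    (hf' : MemLp f' 2 μ) (hg : MemLp g 2 μ) :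
    kernelForm μ K (f + f') g = kernelForm μ K f g + kernelForm μ K f' g := by
  rw [kernelForm, kernelForm, kernelForm,
    ← integral_add (hK.integrable_mul_mul hf hg) (hK.integrable_mul_mul hf' hg)]
  simp only [Pi.add_apply, add_mul]

end IsSchurKernel

lemma kernelForm_smul_left (μ : Measure α) (K : α → α → ℝ) (a : ℝ) (f g : α → ℝ) :
    kernelForm μ K (a • f) g = a * kernelForm μ K f g := by
  simp only [kernelForm, Pi.smul_apply, smul_eq_mul, mul_assoc, integral_const_mul]

end Schur

/-! ### Vanishing of integrable functions tested against a separating algebra -/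

section Separating

open scoped BoundedContinuousFunction

lemma ae_eq_zero_of_forall_mem_starSubalgebra_integral_mul_eq_zero {α : Type*}
    [PseudoEMetricSpace α] [CompleteSpace α] [SecondCountableTopology α] [MeasurableSpace α]
    [BorelSpace α] {μ : Measure α} {A : StarSubalgebra ℝ (α →ᵇ ℝ)}
    (hA : (A.map (BoundedContinuousFunction.toContinuousMapStarₐ ℝ)).SeparatesPoints) {k : α → ℝ}
    (hk : Integrable k μ) (h : ∀ φ ∈ A, ∫ x, k x * φ x ∂μ = 0) : k =ᵐ[μ] 0 := by
  have hpos : IsFiniteMeasure (μ.withDensity fun x ↦ ENNReal.ofReal (k x)) :=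
    isFiniteMeasure_withDensity_ofReal hk.2
  have hneg : IsFiniteMeasure (μ.withDensity fun x ↦ ENNReal.ofReal ((-k) x)) :=
    isFiniteMeasure_withDensity_ofReal hk.neg.2
  have hmeas : AEMeasurable k μ := hk.aestronglyMeasurable.aemeasurable
  have hintegrable {l : α → ℝ} (hl : Integrable l μ) (φ : α →ᵇ ℝ) :
      Integrable (fun x ↦ max (l x) 0 * φ x) μ :=
    hl.pos_part.mul_bdd (c := ‖φ‖) φ.continuous.aestronglyMeasurable (.of_forall φ.norm_coe_le_norm)
  have hdensity {l : α → ℝ} (hl : AEMeasurable l μ) (φ : α →ᵇ ℝ) :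
      ∫ x, φ x ∂μ.withDensity (fun x ↦ ENNReal.ofReal (l x)) = ∫ x, max (l x) 0 * φ x ∂μ := by
    rw [integral_withDensity_eq_integral_toReal_smul₀ hl.ennreal_ofReal (by simp)]
    simp only [ENNReal.toReal_ofReal', smul_eq_mul]
  have hmeasure : μ.withDensity (fun x ↦ ENNReal.ofReal (k x)) =
      μ.withDensity fun x ↦ ENNReal.ofReal ((-k) x) := by
    refine ext_of_forall_mem_subalgebra_integral_eq_of_pseudoEMetric_complete_countable hA
      fun φ hφ ↦ ?_
    rw [hdensity hmeas, hdensity hmeas.neg, ← sub_eq_zero, ← integral_sub (hintegrable hk φ)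
      (hintegrable hk.neg φ)]
    refine (integral_congr_ae (.of_forall fun x ↦ ?_)).trans (h φ hφ)
    simp only [Pi.neg_apply, ← sub_mul, max_zero_sub_eq_self]
  filter_upwards [(withDensity_eq_iff hmeas.ennreal_ofReal hmeas.neg.ennreal_ofReal
    hk.lintegral_lt_top.ne).1 hmeasure] with x hx
  have hparts := congrArg ENNReal.toReal hx
  rw [ENNReal.toReal_ofReal', ENNReal.toReal_ofReal', ← sub_eq_zero] at hparts
  exact (max_zero_sub_eq_self (k x)).symm.trans hparts

end Separating

/-! ### A variational characterization of eigenspaces -/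

section SpectralGap

open Submodule InnerProductSpace

variable {V H : Type*} [AddCommGroup V] [Module ℝ V] [NormedAddCommGroup H]
  [InnerProductSpace ℝ H] {T : V →ₗ[ℝ] H} {W : ℕ → Submodule ℝ V} {A : LinearMap.BilinForm ℝ V}
  {α : ℕ → ℝ} {n : ℕ} {v w : V}

/-- A flag `W 0 ≤ W 1 ≤ …` in `V`, total in the Hilbert space `H` of the map `T : V → H`, that
diagonalizes the form `A` relative to the inner product of `H`: the part of `W (n + 1)` orthogonal
to `W n` consists of eigenvectors of `A` with eigenvalue `α (n + 1)`, and these eigenvalues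
increase with `n`. -/
structure IsEigenFlag (T : V →ₗ[ℝ] H) (W : ℕ → Submodule ℝ V) (A : LinearMap.BilinForm ℝ V)
    (α : ℕ → ℝ) : Prop where
  injective : Function.Injective T
  monotone : Monotone W
  finiteDimensional (n : ℕ) : FiniteDimensional ℝ (W n)
  dense (x : H) {ε : ℝ} (hε : 0 < ε) : ∃ n, ∃ w ∈ W n, ‖x - T w‖ < ε
  symm : A.IsSymm
  bounded_below : ∃ C, ∀ v, -(C * ‖T v‖ ^ 2) ≤ A v v
  strictMono : StrictMono α
  eigen {n : ℕ} {w : V} (hw : w ∈ W (n + 1)) (hw' : ∀ u ∈ W n, ⟪T u, T w⟫_ℝ = 0) (v : V) :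
    A v w = α (n + 1) * ⟪T v, T w⟫_ℝ

namespace IsEigenFlag

lemma exists_sub_orthogonal (h : IsEigenFlag T W A α) (hv : ∀ u ∈ W n, ⟪T u, T v⟫_ℝ = 0) :
    ∃ w ∈ W (n + 1), (∀ u ∈ W n, ⟪T u, T w⟫_ℝ = 0) ∧ ∀ u ∈ W (n + 1), ⟪T u, T (v - w)⟫_ℝ = 0 := by
  have := h.finiteDimensional (n + 1)
  obtain ⟨w, hw, hTw⟩ := ((W (n + 1)).map T).starProjection_apply_mem (T v)
  have horth (u : V) (hu : u ∈ W (n + 1)) : ⟪T u, T (v - w)⟫_ℝ = 0 := by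
    rw [map_sub, hTw]
    exact sub_starProjection_mem_orthogonal (T v) _ (mem_map_of_mem hu)
  refine ⟨w, hw, fun u hu ↦ ?_, horth⟩
  have hsub := horth u (h.monotone n.le_succ hu)
  rwa [map_sub, inner_sub_right, hv u hu, zero_sub, neg_eq_zero] at hsub

lemma apply_self_sub_eq (h : IsEigenFlag T W A α) (hw : w ∈ W (n + 1))
    (hw' : ∀ u ∈ W n, ⟪T u, T w⟫_ℝ = 0) (hvw : ∀ u ∈ W (n + 1), ⟪T u, T (v - w)⟫_ℝ = 0) (a : ℝ) :
    A v v - a * ‖T v‖ ^ 2 = A (v - w) (v - w) - a * ‖T (v - w)‖ ^ 2 +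
      (α (n + 1) - a) * ‖T w‖ ^ 2 := by
  have hpyth : ‖T v‖ ^ 2 = ‖T (v - w)‖ ^ 2 + ‖T w‖ ^ 2 := by
    rw [show T v = T (v - w) + T w by rw [map_sub, sub_add_cancel], norm_add_sq_real,
      real_inner_comm, hvw w hw]
    ring
  have hAvv : A v v = A (v - w) (v - w) + α (n + 1) * ‖T w‖ ^ 2 := by
    have hAw := h.eigen hw hw'
    have hcross : A w (v - w) = 0 := by
      rw [h.symm.eq, hAw, real_inner_comm, hvw w hw, mul_zero]
    rw [← real_inner_self_eq_norm_sq, ← hAw w]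
    have : A v v = A (v - w) (v - w) + A (v - w) w + A w (v - w) + A w w := by
      simp only [map_sub, LinearMap.sub_apply]
      ring
    rw [this, hcross, hAw (v - w), real_inner_comm, hvw w hw]
    ring
  rw [hAvv, hpyth]
  ring

lemma exists_orthogonal_apply_self_le (h : IsEigenFlag T W A α) (hv : ∀ u ∈ W n, ⟪T u, T v⟫_ℝ = 0)
    (k : ℕ) : ∃ r, v - r ∈ W (n + k) ∧ (∀ u ∈ W (n + k), ⟪T u, T r⟫_ℝ = 0) ∧
      A r r - α (n + 1) * ‖T r‖ ^ 2 ≤ A v v - α (n + 1) * ‖T v‖ ^ 2 := by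
  induction k with
  | zero => exact ⟨v, by simp, hv, le_rfl⟩
  | succ k ih =>
    obtain ⟨r, hvr, hr, hle⟩ := ih
    obtain ⟨w, hw, hw', hrw⟩ := h.exists_sub_orthogonal hr
    refine ⟨r - w, ?_, hrw, ?_⟩
    · rw [← sub_add]
      exact add_mem (h.monotone (n + k).le_succ hvr) hw
    · have hα : α (n + 1) ≤ α (n + k + 1) := h.strictMono.monotone (by omega)
      have hw0 := mul_nonneg (sub_nonneg.2 hα) (sq_nonneg ‖T w‖)
      linarith [h.apply_self_sub_eq hw hw' hrw (α (n + 1))]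

lemma norm_le_norm_sub_of_orthogonal {U : Submodule ℝ V} {u r : V} (hu : u ∈ U) (hvr : v - r ∈ U)
    (hr : ∀ u ∈ U, ⟪T u, T r⟫_ℝ = 0) : ‖T r‖ ≤ ‖T v - T u‖ := by
  have hpyth : ‖T v - T u‖ ^ 2 = ‖T (v - r - u)‖ ^ 2 + ‖T r‖ ^ 2 := by
    rw [show T v - T u = T (v - r - u) + T r by simp only [map_sub]; abel, norm_add_sq_real,
      hr _ (sub_mem hvr hu)]
    ring
  exact (pow_le_pow_iff_left₀ (norm_nonneg _) (norm_nonneg _) two_ne_zero).1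
    (hpyth ▸ le_add_of_nonneg_left (sq_nonneg _))

theorem mul_norm_sq_le (h : IsEigenFlag T W A α) (hv : ∀ u ∈ W n, ⟪T u, T v⟫_ℝ = 0) :
    α (n + 1) * ‖T v‖ ^ 2 ≤ A v v := by
  obtain ⟨C, hC⟩ := h.bounded_below
  have hbound {ε : ℝ} (hε : 0 < ε) :
      -(|C + α (n + 1)| * ε ^ 2) ≤ A v v - α (n + 1) * ‖T v‖ ^ 2 := by
    obtain ⟨k, w, hw, hvw⟩ := h.dense (T v) hε
    obtain ⟨r, hvr, hr, hle⟩ := h.exists_orthogonal_apply_self_le hv k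
    have hrε : ‖T r‖ ≤ ε :=
      (norm_le_norm_sub_of_orthogonal (h.monotone (by omega) hw) hvr hr).trans hvw.le
    calc -(|C + α (n + 1)| * ε ^ 2) ≤ -(|C + α (n + 1)| * ‖T r‖ ^ 2) := by gcongr
      _ ≤ -((C + α (n + 1)) * ‖T r‖ ^ 2) := by gcongr; exact le_abs_self _
      _ ≤ A r r - α (n + 1) * ‖T r‖ ^ 2 := by linarith [hC r]
      _ ≤ _ := hle
  have hlim : Filter.Tendsto (fun ε : ℝ ↦ -(|C + α (n + 1)| * ε ^ 2)) (nhdsWithin 0 (Set.Ioi 0))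
      (nhds 0) :=
    (Continuous.tendsto' (by fun_prop) _ _ (by simp)).mono_left nhdsWithin_le_nhds
  refine sub_nonneg.1 (le_of_tendsto hlim ?_)
  filter_upwards [self_mem_nhdsWithin] with ε hε using hbound hε

theorem apply_self_eq_iff (h : IsEigenFlag T W A α) (hv : ∀ u ∈ W n, ⟪T u, T v⟫_ℝ = 0) :
    A v v = α (n + 1) * ‖T v‖ ^ 2 ↔ v ∈ W (n + 1) := by
  refine ⟨fun hA ↦ ?_, fun hvW ↦ by rw [h.eigen hvW hv, real_inner_self_eq_norm_sq]⟩
  obtain ⟨w, hw, hw', hvw⟩ := h.exists_sub_orthogonal hv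
  have hsplit := h.apply_self_sub_eq hw hw' hvw (α (n + 1))
  have hgap := h.mul_norm_sq_le hvw
  have hα : 0 < α (n + 2) - α (n + 1) := sub_pos.2 (h.strictMono (by omega))
  have hle : (α (n + 2) - α (n + 1)) * ‖T (v - w)‖ ^ 2 ≤ 0 := by
    rw [hA] at hsplit
    linarith
  have hzero : ‖T (v - w)‖ ^ 2 = 0 := le_antisymm (nonpos_of_mul_nonpos_right hle hα) (sq_nonneg _)
  have heq : T (v - w) = 0 := norm_eq_zero.1 (pow_eq_zero_iff two_ne_zero |>.1 hzero)
  rwa [sub_eq_zero.1 ((map_eq_zero_iff T h.injective).1 heq)]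

end IsEigenFlag

end SpectralGap

/-! ### The energy space and its quadratic forms -/

section EnergySpace

open Module InnerProductSpace

section General

variable {E : Type*} [NormedAddCommGroup E] [InnerProductSpace ℝ E]

lemma memLp_of_isBigO_bracketPow [FiniteDimensional ℝ E] [MeasurableSpace E] [BorelSpace E]
    {μ : Measure E} [μ.IsAddHaarMeasure] {F : Type*} [NormedAddCommGroup F] {m p : ℝ} {f : E → F}
    (hf : f =O[⊤] (bracketPow m : E → ℝ)) (hfm : AEStronglyMeasurable f μ) (hp : 0 < p)
    (hm : m * p < -finrank ℝ E) : MemLp f (ENNReal.ofReal p) μ := by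
  rw [← integrable_norm_rpow_iff hfm (by simpa using hp) ENNReal.ofReal_ne_top,
    ENNReal.toReal_ofReal hp.le]
  have hpow : (fun x ↦ ‖f x‖ ^ p) =O[⊤] (bracketPow (m * p) : E → ℝ) := by
    refine (hf.norm_left.rpow hp.le (.of_forall fun x ↦ (bracketPow_pos m x).le)).congr_right
      fun x ↦ ?_
    rw [bracketPow, ← rpow_mul (one_add_norm_sq_pos x).le, bracketPow, div_mul_eq_mul_div]
  exact integrable_of_isBigO_bracketPow hpow
    (hfm.norm.aemeasurable.pow_const p).aestronglyMeasurable hm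

lemma memLp_two_of_isBigO_bracketPow [FiniteDimensional ℝ E] [MeasurableSpace E] [BorelSpace E]
    {μ : Measure E} [μ.IsAddHaarMeasure] {F : Type*} [NormedAddCommGroup F] {m : ℝ} {f : E → F}
    (hf : f =O[⊤] (bracketPow m : E → ℝ)) (hfm : AEStronglyMeasurable f μ)
    (hm : m * 2 < -finrank ℝ E) : MemLp f 2 μ := by
  simpa only [ENNReal.ofReal_ofNat] using memLp_of_isBigO_bracketPow hf hfm two_pos hm

variable [CompleteSpace E] {f g : E → ℝ}

lemma gradient_add (hf : Differentiable ℝ f) (hg : Differentiable ℝ g) :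
    gradient (f + g) = gradient f + gradient g := by
  ext1 x
  rw [gradient, fderiv_add (hf x) (hg x), map_add]
  rfl

lemma gradient_const_smul (hf : Differentiable ℝ f) (c : ℝ) :
    gradient (c • f) = c • gradient f := by
  ext1 x
  rw [gradient, fderiv_const_smul (hf x) c, map_smul]
  rfl

lemma measurable_gradient [MeasurableSpace E] [BorelSpace E] (f : E → ℝ) :
    Measurable (gradient f) :=
  (toDual ℝ E).symm.continuous.measurable.comp (measurable_fderiv ℝ f)

end General

variable {d : ℕ}

/-- The measure `(1 + |x|²)⁻² dx`. -/
def bubbleMeasure (d : ℕ) : Measure (EuclideanSpace ℝ (Fin d)) :=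
  volume.withDensity fun x ↦ ENNReal.ofReal (bracketPow (-4) x)

instance : SFinite (bubbleMeasure d) := inferInstanceAs (SFinite (volume.withDensity _))

lemma measurable_ofReal_bracketPow (m : ℝ) :
    Measurable fun x : EuclideanSpace ℝ (Fin d) ↦ ENNReal.ofReal (bracketPow m x) :=
  (continuous_bracketPow m).measurable.ennreal_ofReal

instance : (bubbleMeasure d).IsOpenPosMeasure :=
  (withDensity_absolutelyContinuous' (measurable_ofReal_bracketPow _).aemeasurable
    (.of_forall fun x ↦ (ENNReal.ofReal_pos.2 (bracketPow_pos _ x)).ne')).isOpenPosMeasure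

lemma integral_bubbleMeasure (f : EuclideanSpace ℝ (Fin d) → ℝ) :
    ∫ x, f x ∂bubbleMeasure d = ∫ x, bracketPow (-4) x * f x := by
  rw [bubbleMeasure, integral_withDensity_eq_integral_toReal_smul (measurable_ofReal_bracketPow _)
    (.of_forall fun _ ↦ ENNReal.ofReal_lt_top)]
  simp only [ENNReal.toReal_ofReal (bracketPow_pos _ _).le, smul_eq_mul]

lemma integrable_bubbleMeasure_iff {f : EuclideanSpace ℝ (Fin d) → ℝ} :
    Integrable f (bubbleMeasure d) ↔ Integrable fun x ↦ bracketPow (-4) x * f x := by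
  rw [bubbleMeasure, integrable_withDensity_iff_integrable_smul' (measurable_ofReal_bracketPow _)
    (.of_forall fun _ ↦ ENNReal.ofReal_lt_top)]
  simp only [ENNReal.toReal_ofReal (bracketPow_pos _ _).le, smul_eq_mul]

lemma bracketPow_neg_four_mul (x : EuclideanSpace ℝ (Fin d)) (a : ℝ) :
    bracketPow (-4) x * a = a / (1 + ‖x‖ ^ 2) ^ 2 := by
  rw [bracketPow_neg_four, bracketPow_neg, bracketPow_two, inv_pow, inv_mul_eq_div]

/-- The differentiable representatives of `D^{1,2}(ℝ^d) ∩ L²(ℝ^d, (1 + |x|²)⁻² dx)`. -/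
def energySpace (d : ℕ) : Submodule ℝ (EuclideanSpace ℝ (Fin d) → ℝ) where
  carrier := {f | Differentiable ℝ f ∧ MemLp (gradient f) 2 volume ∧
    MemLp f (ENNReal.ofReal (2 * d / (d - 2))) volume ∧ MemLp f 2 (bubbleMeasure d)}
  add_mem' := fun ⟨hf, hgf, hpf, hwf⟩ ⟨hg, hgg, hpg, hwg⟩ ↦
    ⟨hf.add hg, gradient_add hf hg ▸ hgf.add hgg, hpf.add hpg, hwf.add hwg⟩
  zero_mem' := ⟨differentiable_const 0, by
    rw [show gradient 0 = 0 from gradient_const' (0 : ℝ)]; exact MemLp.zero, MemLp.zero, MemLp.zero⟩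
  smul_mem' := fun c _ ⟨hf, hgf, hpf, hwf⟩ ↦
    ⟨hf.const_smul c, gradient_const_smul hf c ▸ hgf.const_smul c, hpf.const_smul c,
      hwf.const_smul c⟩

namespace energySpace

variable (v w : energySpace d)

lemma differentiable : Differentiable ℝ (v : EuclideanSpace ℝ (Fin d) → ℝ) := v.2.1

lemma memLp_gradient : MemLp (gradient (v : EuclideanSpace ℝ (Fin d) → ℝ)) 2 volume := v.2.2.1

lemma memLp : MemLp (v : EuclideanSpace ℝ (Fin d) → ℝ) (ENNReal.ofReal (2 * d / (d - 2))) volume :=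
  v.2.2.2.1

lemma memLp_bubbleMeasure : MemLp (v : EuclideanSpace ℝ (Fin d) → ℝ) 2 (bubbleMeasure d) :=
  v.2.2.2.2

/-- The inclusion of the energy space into the weighted space `L²(ℝ^d, (1 + |x|²)⁻² dx)`. -/
def toL2 : energySpace d →ₗ[ℝ] Lp ℝ 2 (bubbleMeasure d) where
  toFun v := (memLp_bubbleMeasure v).toLp v
  map_add' v w := MemLp.toLp_add (memLp_bubbleMeasure v) (memLp_bubbleMeasure w)
  map_smul' c v := MemLp.toLp_const_smul c (memLp_bubbleMeasure v)

lemma coeFn_toL2 : toL2 v =ᵐ[bubbleMeasure d] v.1 := (memLp_bubbleMeasure v).coeFn_toLp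

lemma inner_toL2 :
    ⟪toL2 v, toL2 w⟫_ℝ = ∫ x, bracketPow (-4) x * (v.1 x * w.1 x) := by
  rw [L2.inner_def, ← integral_bubbleMeasure]
  refine integral_congr_ae ?_
  filter_upwards [coeFn_toL2 v, coeFn_toL2 w] with x hv hw
  rw [hv, hw, inner_apply]

lemma toL2_injective : Function.Injective (toL2 (d := d)) := fun v w hvw ↦
  Subtype.ext (Continuous.ae_eq_iff_eq _ (differentiable v).continuous
    (differentiable w).continuous |>.1 ((coeFn_toL2 v).symm.trans (hvw ▸ coeFn_toL2 w)))

/-- The gradient as a map from the energy space to the vector fields in `L²(ℝ^d)`. -/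
def gradientL2 : energySpace d →ₗ[ℝ] Lp (EuclideanSpace ℝ (Fin d)) 2
    (volume : Measure (EuclideanSpace ℝ (Fin d))) where
  toFun v := (memLp_gradient v).toLp _
  map_add' v w := by
    rw [← MemLp.toLp_add]
    exact MemLp.toLp_congr _ _ (.of_eq (gradient_add (differentiable v) (differentiable w)))
  map_smul' c v := by
    rw [RingHom.id_apply, ← MemLp.toLp_const_smul]
    exact MemLp.toLp_congr _ _ (.of_eq (gradient_const_smul (differentiable v) c))

lemma coeFn_gradientL2 : gradientL2 v =ᵐ[volume] gradient v.1 := (memLp_gradient v).coeFn_toLp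

/-- The Dirichlet form `∫ ⟪∇v, ∇w⟫`. -/
def dirichletForm (d : ℕ) : LinearMap.BilinForm ℝ (energySpace d) :=
  (innerₗ _).compl₁₂ gradientL2 gradientL2

lemma dirichletForm_apply : dirichletForm d v w = ∫ x, ⟪gradient v.1 x, gradient w.1 x⟫_ℝ := by
  rw [dirichletForm, LinearMap.compl₁₂_apply, innerₗ_apply_apply, L2.inner_def]
  refine integral_congr_ae ?_
  filter_upwards [coeFn_gradientL2 v, coeFn_gradientL2 w] with x hv hw
  rw [hv, hw]

lemma isSymm_dirichletForm : (dirichletForm d).IsSymm :=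
  ⟨fun v w ↦ real_inner_comm (gradientL2 w) (gradientL2 v)⟩

lemma dirichletForm_self_nonneg : 0 ≤ dirichletForm d v v :=
  real_inner_self_nonneg (x := gradientL2 v)

end energySpace

end EnergySpace

section BubbleSpace

open Asymptotics InnerProductSpace Laplacian

variable {d : ℕ}

lemma mem_energySpace_of_memD12 (hd : 2 < d) {f : EuclideanSpace ℝ (Fin d) → ℝ} (hf : MemD12 d f)
    (hf' : Integrable fun x ↦ f x ^ 2 / (1 + ‖x‖ ^ 2) ^ 2) : f ∈ energySpace d := by
  obtain ⟨hdiff, hgrad, hpow⟩ := hf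
  have hd' : (0 : ℝ) < d - 2 := sub_pos.2 (by exact_mod_cast hd)
  refine ⟨hdiff, (memLp_two_iff_integrable_sq_norm
    (measurable_gradient f).aestronglyMeasurable).2 hgrad, ?_, ?_⟩
  · rwa [← integrable_norm_rpow_iff hdiff.continuous.aestronglyMeasurable
      (by simpa using div_pos (by positivity) hd') ENNReal.ofReal_ne_top,
      ENNReal.toReal_ofReal (by positivity)]
  · rw [memLp_two_iff_integrable_sq hdiff.continuous.aestronglyMeasurable,
      integrable_bubbleMeasure_iff]
    simpa only [bracketPow_neg_four_mul] using hf'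

lemma bubblePoly_mem_energySpace (hd : 2 < d) (p : MvPolynomial (Option (Fin d)) ℝ) :
    bubblePoly p ∈ energySpace d := by
  have hd' : (2 : ℝ) < d := by exact_mod_cast hd
  have hp := isSymbol_bubblePoly 1 p
  have hcont : Continuous (bubblePoly p) := hp.contDiff.continuous
  refine ⟨hp.contDiff.differentiable one_ne_zero, ?_, ?_, ?_⟩
  · refine memLp_two_of_isBigO_bracketPow hp.gradient_isBigO
      (measurable_gradient _).aestronglyMeasurable ?_
    rw [finrank_euclideanSpace_fin]
    linarith
  · refine memLp_of_isBigO_bracketPow hp.isBigO hcont.aestronglyMeasurable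
      (div_pos (by positivity) (by linarith)) ?_
    rw [finrank_euclideanSpace_fin, mul_div_assoc', div_lt_iff₀ (by linarith)]
    nlinarith
  · rw [memLp_two_iff_integrable_sq hcont.aestronglyMeasurable, integrable_bubbleMeasure_iff]
    simp only [sq]
    refine integrable_of_isBigO_bracketPow (isBigO_bracketPow_mul (isBigO_refl _ _)
      (isBigO_bracketPow_mul hp.isBigO hp.isBigO))
      ((continuous_bracketPow _).mul (hcont.mul hcont)).aestronglyMeasurable ?_
    rw [finrank_euclideanSpace_fin]
    linarith

/-- The map `p ↦ u⋆ · p(ω)` from polynomials to the energy space. -/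
def bubbleMap (hd : 2 < d) : MvPolynomial (Option (Fin d)) ℝ →ₗ[ℝ] energySpace d where
  toFun p := ⟨bubblePoly p, bubblePoly_mem_energySpace hd p⟩
  map_add' p q := by
    ext x
    simp [bubblePoly, mul_add]
  map_smul' c p := by
    ext x
    simp [bubblePoly, mul_left_comm]

namespace energySpace

lemma integrable_mul_bracketPow (hd : 2 < d) (v : energySpace d) :
    Integrable fun x ↦ v.1 x * bracketPow (-d) x := by
  have hd' : (2 : ℝ) < d := by exact_mod_cast hd
  have hd2 : (0 : ℝ) < d - 2 := by linarith
  have hconj : (2 * d / (d - 2) : ℝ).HolderConjugate (2 * d / (d + 2)) := by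
    rw [Real.holderConjugate_iff, lt_div_iff₀ hd2]
    exact ⟨by linarith, by field_simp; ring⟩
  have := hconj.ennrealOfReal
  refine (memLp v).integrable_mul (memLp_of_isBigO_bracketPow (isBigO_refl _ _)
    (continuous_bracketPow _).aestronglyMeasurable hconj.symm.pos ?_)
  rw [finrank_euclideanSpace_fin, mul_div_assoc', div_lt_iff₀ (by linarith)]
  nlinarith

lemma integrable_norm_gradient_mul_bracketPow (hd : 2 < d) (v : energySpace d) :
    Integrable fun x ↦ ‖gradient v.1 x‖ * bracketPow (1 - d) x := by
  have hd' : (2 : ℝ) < d := by exact_mod_cast hd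
  refine (memLp_gradient v).norm.integrable_mul (memLp_two_of_isBigO_bracketPow (isBigO_refl _ _)
    (continuous_bracketPow _).aestronglyMeasurable ?_)
  rw [finrank_euclideanSpace_fin]
  linarith

lemma dirichletForm_bubbleMap (hd : 2 < d) (v : energySpace d)
    (p : MvPolynomial (Option (Fin d)) ℝ) : dirichletForm d v (bubbleMap hd p) =
      ⟪toL2 v, toL2 (bubbleMap hd (bubbleOp (d : ℝ) p))⟫_ℝ := by
  have hparts := integral_inner_gradient_eq_neg_integral_mul_laplacian (μ := volume)
    (differentiable v) (isSymbol_bubblePoly 2 p) (by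
      simpa only [sub_sub_cancel_left] using integrable_mul_bracketPow hd v) (by
      simpa only [sub_right_comm _ _ (1 : ℝ), show (2 - 1 : ℝ) = 1 by norm_num] using
        integrable_norm_gradient_mul_bracketPow hd v)
  refine (dirichletForm_apply ..).trans (hparts.trans ?_)
  rw [inner_toL2, ← integral_neg]
  refine integral_congr_ae (.of_forall fun x ↦ ?_)
  simp only [laplacian_bubblePoly, bubbleMap, LinearMap.coe_mk, AddHom.coe_mk]
  ring

end energySpace

lemma integral_greenKernel_mul_bubblePoly (hd : 2 < d) (p : MvPolynomial (Option (Fin d)) ℝ)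
    (x : EuclideanSpace ℝ (Fin d)) :
    ∫ y, greenKernel d (x - y) * bubblePoly (bubbleOp (d : ℝ) p) y ∂bubbleMeasure d =
      bubblePoly p x := by
  have hdecay : Δ (bubblePoly p) =O[⊤]
      (bracketPow (-(d + 2)) : EuclideanSpace ℝ (Fin d) → ℝ) := by
    have hmul := isBigO_bracketPow_mul (isBigO_refl (bracketPow (-4)) _)
      (isSymbol_bubblePoly 0 (bubbleOp (d : ℝ) p)).isBigO
    rw [show -4 + (2 - d : ℝ) = -(d + 2) by ring] at hmul
    exact hmul.neg_left.congr_left fun y ↦ (laplacian_bubblePoly p y).symm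
  rw [← invLap_neg_laplacian hd (isSymbol_bubblePoly 2 p) hdecay x, integral_bubbleMeasure, invLap]
  simp only [laplacian_bubblePoly, neg_neg, mul_left_comm]

lemma bubblePoly_one : bubblePoly (1 : MvPolynomial (Option (Fin d)) ℝ) = uAT d := by
  ext x
  simp [bubblePoly]

lemma isSchurKernel_greenKernel (hd : 2 < d) :
    IsSchurKernel (bubbleMeasure d) (fun x y ↦ greenKernel d (x - y)) (uAT d)
      (bubbleEigenvalue (d : ℝ) 0)⁻¹ where
  measurable := by
    unfold greenKernel
    fun_prop
  nonneg x y := greenKernel_nonneg hd.le _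
  symm x y := by rw [greenKernel, greenKernel, norm_sub_rev]
  measurable_weight := continuous_uAT.measurable
  weight_pos x := uAT_eq_bracketPow (d := d) ▸ bracketPow_pos _ x
  integrable x := by
    rw [integrable_bubbleMeasure_iff]
    refine (integrable_greenKernel_mul_bracketPow hd x).congr (.of_forall fun y ↦ ?_)
    simp only [uAT_eq_bracketPow, mul_left_comm (bracketPow _ _), bracketPow_mul_bracketPow]
    ring_nf
  integral_eq x := by
    have hsmul (c : ℝ) : bubblePoly (c • (1 : MvPolynomial (Option (Fin d)) ℝ)) = c • uAT d := by
      rw [← bubblePoly_one]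
      exact congr_arg Subtype.val (map_smul (bubbleMap hd) c 1)
    have hgreen := integral_greenKernel_mul_bubblePoly hd 1 x
    simp only [bubbleOp_one, hsmul, bubblePoly_one, Pi.smul_apply, smul_eq_mul, mul_left_comm,
      integral_const_mul] at hgreen
    rw [← hgreen, inv_mul_cancel_left₀ (bubbleEigenvalue_pos (Nat.ofNat_lt_cast.2 hd) 0).ne']

namespace energySpace

/-- The form `∬ v(x) G_d(x - y) w(y)` of the Green function `G_d` for the weighted measure. -/
def greenForm (hd : 2 < d) : LinearMap.BilinForm ℝ (energySpace d) :=
  have hK := isSchurKernel_greenKernel hd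
  LinearMap.mk₂ ℝ
    (fun v w ↦ kernelForm (bubbleMeasure d) (fun x y ↦ greenKernel d (x - y)) v.1 w.1)
    (fun v v' w ↦ hK.kernelForm_add_left (memLp_bubbleMeasure v) (memLp_bubbleMeasure v')
      (memLp_bubbleMeasure w))
    (fun c v w ↦ kernelForm_smul_left _ _ c v.1 w.1)
    (fun v w w' ↦ by
      simp only [hK.kernelForm_comm v.1]
      exact hK.kernelForm_add_left (memLp_bubbleMeasure w) (memLp_bubbleMeasure w')
        (memLp_bubbleMeasure v))
    (fun c v w ↦ by
      simp only [hK.kernelForm_comm v.1]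
      exact kernelForm_smul_left _ _ c w.1 v.1)

lemma isSymm_greenForm (hd : 2 < d) : (greenForm hd).IsSymm :=
  ⟨fun v w ↦ (isSchurKernel_greenKernel hd).kernelForm_comm v.1 w.1⟩

lemma greenForm_apply (hd : 2 < d) (v w : energySpace d) : greenForm hd v w =
    ∫ x, v.1 x * ∫ y, greenKernel d (x - y) * w.1 y ∂bubbleMeasure d ∂bubbleMeasure d :=
  (isSchurKernel_greenKernel hd).kernelForm_eq_integral (memLp_bubbleMeasure v)
    (memLp_bubbleMeasure w)

lemma greenForm_self_le (hd : 2 < d) (v : energySpace d) :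
    greenForm hd v v ≤ (bubbleEigenvalue (d : ℝ) 0)⁻¹ * ‖toL2 v‖ ^ 2 := by
  refine ((isSchurKernel_greenKernel hd).kernelForm_self_le (memLp_bubbleMeasure v)).trans_eq ?_
  rw [← real_inner_self_eq_norm_sq, inner_toL2, integral_bubbleMeasure]
  simp only [sq]

lemma greenForm_bubbleMap (hd : 2 < d) (v : energySpace d)
    (p : MvPolynomial (Option (Fin d)) ℝ) :
    greenForm hd v (bubbleMap hd (bubbleOp (d : ℝ) p)) = ⟪toL2 v, toL2 (bubbleMap hd p)⟫_ℝ := by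
  rw [greenForm_apply, inner_toL2, integral_bubbleMeasure]
  simp only [bubbleMap, LinearMap.coe_mk, AddHom.coe_mk, integral_greenKernel_mul_bubblePoly hd]

end energySpace

end BubbleSpace

/-! ### Density of the polynomials in inverse stereographic coordinates -/

section Density

open MvPolynomial
open scoped BoundedContinuousFunction

variable {d : ℕ}

lemma injective_invStereo :
    Function.Injective fun (x : EuclideanSpace ℝ (Fin d)) a ↦ invStereo a x := by
  intro x y hxy
  have hnone : 2 * bracketPow (-2) x - 1 = 2 * bracketPow (-2) y - 1 := congr_fun hxy none
  ext j
  have hsome : 2 * x j * bracketPow (-2) x = 2 * y j * bracketPow (-2) y := congr_fun hxy (some j)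
  rw [show bracketPow (-2) x = bracketPow (-2) y by linarith] at hsome
  linarith [mul_right_cancel₀ (bracketPow_pos (-2) y).ne' hsome]

lemma exists_norm_invStereo_le (a : Option (Fin d)) :
    ∃ C, ∀ x : EuclideanSpace ℝ (Fin d), ‖invStereo a x‖ ≤ C := by
  obtain ⟨C, hC⟩ := (isSymbol_invStereo 0 a).isBigO.bound
  exact ⟨C, fun x ↦ by simpa using hC x⟩

/-- `invStereo a` as a bounded continuous function. -/
def invStereoBCF (a : Option (Fin d)) : EuclideanSpace ℝ (Fin d) →ᵇ ℝ :=
  .ofNormedAddCommGroup (invStereo a) (contDiff_invStereo a).continuous _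
    (exists_norm_invStereo_le a).choose_spec

lemma aeval_invStereoBCF_apply (p : MvPolynomial (Option (Fin d)) ℝ)
    (x : EuclideanSpace ℝ (Fin d)) :
    aeval invStereoBCF p x = eval (fun a ↦ invStereo a x) p := by
  induction p using MvPolynomial.induction_on with
  | C r => simp
  | add p q hp hq => simp [hp, hq]
  | mul_X p a hp => simp [hp, invStereoBCF]

/-- The algebra of polynomials in the inverse stereographic coordinates. -/
def invStereoAlgebra (d : ℕ) : StarSubalgebra ℝ (EuclideanSpace ℝ (Fin d) →ᵇ ℝ) where
  toSubalgebra := (aeval invStereoBCF).range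
  star_mem' {φ} hφ := by
    rwa [show star φ = φ from BoundedContinuousFunction.ext fun x ↦ star_trivial (φ x)]

lemma separatesPoints_invStereoAlgebra :
    ((invStereoAlgebra d).map
      (BoundedContinuousFunction.toContinuousMapStarₐ ℝ)).SeparatesPoints := by
  intro x y hxy
  obtain ⟨a, ha⟩ := Function.ne_iff.1 (injective_invStereo.ne hxy)
  exact ⟨invStereo a, ⟨_, ⟨invStereoBCF a, ⟨X a, aeval_X _ _⟩, rfl⟩, rfl⟩, ha⟩

variable (hd : 2 < d)

lemma orthogonal_range_toL2_comp_bubbleMap :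
    (LinearMap.range (energySpace.toL2 ∘ₗ bubbleMap hd))ᗮ = ⊥ := by
  refine (Submodule.eq_bot_iff _).2 fun h hh ↦ ?_
  have hu : MemLp (uAT d) 2 (bubbleMeasure d) :=
    bubblePoly_one (d := d) ▸ energySpace.memLp_bubbleMeasure (bubbleMap hd 1)
  have horth (φ) (hφ : φ ∈ invStereoAlgebra d) : ∫ x, h x * uAT d x * φ x ∂bubbleMeasure d = 0 := by
    obtain ⟨p, rfl⟩ := hφ
    rw [← (Submodule.mem_orthogonal _ _).1 hh _ ⟨p, rfl⟩, L2.inner_def]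
    refine integral_congr_ae ?_
    filter_upwards [energySpace.coeFn_toL2 (bubbleMap hd p)] with x hx
    rw [LinearMap.comp_apply, hx, inner_apply, mul_comm _ (h x), mul_assoc]
    exact congr_arg (fun t ↦ h x * (uAT d x * t)) (aeval_invStereoBCF_apply p x)
  refine (Lp.eq_zero_iff_ae_eq_zero).2 ?_
  filter_upwards [ae_eq_zero_of_forall_mem_starSubalgebra_integral_mul_eq_zero
    separatesPoints_invStereoAlgebra ((Lp.memLp h).integrable_mul hu) horth] with x hx
  exact (mul_eq_zero.1 hx).resolve_right (uAT_eq_bracketPow (d := d) ▸ (bracketPow_pos _ x).ne')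

lemma exists_norm_sub_toL2_bubbleMap_lt (h : Lp ℝ 2 (bubbleMeasure d)) {ε : ℝ} (hε : 0 < ε) :
    ∃ p, ‖h - energySpace.toL2 (bubbleMap hd p)‖ < ε := by
  have hmem : h ∈ (LinearMap.range (energySpace.toL2 ∘ₗ bubbleMap hd)).topologicalClosure :=
    Submodule.topologicalClosure_eq_top_iff.2 (orthogonal_range_toL2_comp_bubbleMap hd) ▸ trivial
  obtain ⟨_, ⟨p, rfl⟩, hp⟩ := Metric.mem_closure_iff.1 hmem ε hε
  exact ⟨p, by rwa [dist_eq_norm] at hp⟩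

end Density

/-! ### The flag of polynomials of bounded degree -/

section BubbleFlag

open MvPolynomial InnerProductSpace energySpace

variable {d : ℕ}

/-- The functions `u⋆ · p(ω)` with `p` of degree at most `n`: under the conformal change of
variables, the spherical harmonics of degree at most `n`. -/
def bubbleFlag (hd : 2 < d) (n : ℕ) : Submodule ℝ (energySpace d) :=
  (restrictTotalDegree (Option (Fin d)) ℝ n).map (bubbleMap hd)

lemma inner_toL2_bubbleOp_comm (hd : 2 < d) (p q : MvPolynomial (Option (Fin d)) ℝ) :
    ⟪toL2 (bubbleMap hd (bubbleOp (d : ℝ) p)), toL2 (bubbleMap hd q)⟫_ℝ =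
      ⟪toL2 (bubbleMap hd p), toL2 (bubbleMap hd (bubbleOp (d : ℝ) q))⟫_ℝ := by
  rw [← dirichletForm_bubbleMap, ← isSymm_dirichletForm.eq, dirichletForm_bubbleMap]
  exact real_inner_comm _ _

lemma bubbleMap_bubbleOp_eq_of_orthogonal (hd : 2 < d) {n : ℕ}
    {q : MvPolynomial (Option (Fin d)) ℝ} (hq : q ∈ restrictTotalDegree (Option (Fin d)) ℝ (n + 1))
    (horth : ∀ u ∈ bubbleFlag hd n, ⟪toL2 u, toL2 (bubbleMap hd q)⟫_ℝ = 0) :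
    bubbleMap hd (bubbleOp (d : ℝ) q) = bubbleEigenvalue (d : ℝ) (n + 1) • bubbleMap hd q := by
  obtain ⟨r, hr⟩ : ∃ r, r = bubbleOp (d : ℝ) q - bubbleEigenvalue (d : ℝ) (n + 1) • q := ⟨_, rfl⟩
  have hrn : r ∈ restrictTotalDegree (Option (Fin d)) ℝ n :=
    hr ▸ bubbleOp_sub_mem_restrictTotalDegree (d : ℝ) hq
  have hself : ⟪toL2 (bubbleMap hd r), toL2 (bubbleMap hd r)⟫_ℝ = 0 := by
    nth_rw 2 [hr]
    rw [map_sub, map_sub, map_smul, map_smul, inner_sub_right, inner_smul_right,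
      ← inner_toL2_bubbleOp_comm, horth _ ⟨r, hrn, rfl⟩,
      horth _ ⟨_, bubbleOp_mem_restrictTotalDegree (d : ℝ) hrn, rfl⟩, mul_zero, sub_zero]
  have hzero : bubbleMap hd r = 0 :=
    toL2_injective ((inner_self_eq_zero.1 hself).trans (map_zero toL2).symm)
  rwa [hr, map_sub, map_smul, sub_eq_zero] at hzero

lemma monotone_bubbleFlag (hd : 2 < d) : Monotone (bubbleFlag hd) := fun _ _ hmn ↦
  Submodule.map_mono (restrictTotalDegree_mono hmn)

lemma exists_mem_bubbleFlag_norm_sub_lt (hd : 2 < d) (h : Lp ℝ 2 (bubbleMeasure d)) {ε : ℝ}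
    (hε : 0 < ε) : ∃ n, ∃ w ∈ bubbleFlag hd n, ‖h - toL2 w‖ < ε := by
  obtain ⟨p, hp⟩ := exists_norm_sub_toL2_bubbleMap_lt hd h hε
  exact ⟨p.totalDegree, _, ⟨p, (mem_restrictTotalDegree ..).2 le_rfl, rfl⟩, hp⟩

theorem isEigenFlag_dirichletForm (hd : 2 < d) :
    IsEigenFlag toL2 (bubbleFlag hd) (dirichletForm d) (bubbleEigenvalue (d : ℝ)) where
  injective := toL2_injective
  monotone := monotone_bubbleFlag hd
  finiteDimensional n := by unfold bubbleFlag; infer_instance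
  dense := exists_mem_bubbleFlag_norm_sub_lt hd
  symm := isSymm_dirichletForm
  bounded_below := ⟨0, fun v ↦ by simpa using dirichletForm_self_nonneg v⟩
  strictMono := strictMono_bubbleEigenvalue (Nat.ofNat_lt_cast.2 hd)
  eigen := by
    rintro n _ ⟨q, hq, rfl⟩ horth v
    rw [dirichletForm_bubbleMap, bubbleMap_bubbleOp_eq_of_orthogonal hd hq horth, map_smul,
      inner_smul_right]

theorem isEigenFlag_neg_greenForm (hd : 2 < d) :
    IsEigenFlag toL2 (bubbleFlag hd) (-greenForm hd) fun n ↦ -(bubbleEigenvalue (d : ℝ) n)⁻¹ where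
  injective := toL2_injective
  monotone := monotone_bubbleFlag hd
  finiteDimensional n := by unfold bubbleFlag; infer_instance
  dense := exists_mem_bubbleFlag_norm_sub_lt hd
  symm := (isSymm_greenForm hd).neg
  bounded_below := ⟨_, fun v ↦ neg_le_neg (greenForm_self_le hd v)⟩
  strictMono m n hmn := neg_lt_neg <|
    inv_strictAnti₀ (bubbleEigenvalue_pos (Nat.ofNat_lt_cast.2 hd) m)
      (strictMono_bubbleEigenvalue (Nat.ofNat_lt_cast.2 hd) hmn)
  eigen := by
    rintro n _ ⟨q, hq, rfl⟩ horth v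
    have hgreen := greenForm_bubbleMap hd v q
    rw [bubbleMap_bubbleOp_eq_of_orthogonal hd hq horth, map_smul, smul_eq_mul] at hgreen
    rw [LinearMap.neg_apply, LinearMap.neg_apply, ← hgreen, neg_mul,
      inv_mul_cancel_left₀ (bubbleEigenvalue_pos (Nat.ofNat_lt_cast.2 hd) _).ne']

end BubbleFlag

/-! ### The two quadratic forms and the first eigenspace -/

section FirstEigenspace

open MvPolynomial InnerProductSpace energySpace

variable {d : ℕ}

lemma mem_restrictTotalDegree_one_iff {σ R : Type*} [Fintype σ] [CommRing R]
    {p : MvPolynomial σ R} :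
    p ∈ restrictTotalDegree σ R 1 ↔ ∃ (c : R) (l : σ → R), p = c • 1 + ∑ a, l a • X a := by
  refine ⟨fun hp ↦ ?_, ?_⟩
  · have hlin : homogeneousComponent 1 p ∈ homogeneousSubmodule σ R 1 :=
      homogeneousComponent_isHomogeneous 1 p
    rw [homogeneousSubmodule_one_eq_span_X, Submodule.mem_span_range_iff_exists_fun] at hlin
    obtain ⟨l, hl⟩ := hlin
    refine ⟨coeff 0 p, l, ?_⟩
    have hsubset : Finset.range (p.totalDegree + 1) ⊆ Finset.range 2 :=
      Finset.range_mono (Nat.succ_le_succ ((mem_restrictTotalDegree ..).1 hp))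
    rw [hl, smul_eq_C_mul, mul_one, ← homogeneousComponent_zero, ← Finset.sum_range_one
      (homogeneousComponent · p), ← Finset.sum_range_succ, ← Finset.sum_subset hsubset fun k _ hk ↦
        homogeneousComponent_eq_zero k p (by simpa using hk), sum_homogeneousComponent]
  · rintro ⟨c, l, rfl⟩
    have hone : (1 : MvPolynomial σ R).totalDegree ≤ 1 := by simp
    exact Submodule.add_mem _ (Submodule.smul_mem _ _ ((mem_restrictTotalDegree ..).2 hone))
      (Submodule.sum_mem _ fun a _ ↦ Submodule.smul_mem _ _
        ((mem_restrictTotalDegree ..).2 (isHomogeneous_X R a).totalDegree_le))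

lemma inner_toL2_bubbleMap_one_X (hd : 2 < d) (a : Option (Fin d)) :
    ⟪toL2 (bubbleMap hd 1), toL2 (bubbleMap hd (X a))⟫_ℝ = 0 := by
  have hcomm := inner_toL2_bubbleOp_comm hd 1 (X a)
  rw [bubbleOp_one, bubbleOp_X, map_smul, map_smul, map_smul, map_smul, real_inner_smul_left,
    real_inner_smul_right, mul_eq_mul_right_iff] at hcomm
  exact hcomm.resolve_left (strictMono_bubbleEigenvalue (Nat.ofNat_lt_cast.2 hd) zero_lt_one).ne

lemma inner_toL2_eq_zero_of_mem_bubbleFlag_zero (hd : 2 < d) {u v : energySpace d}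
    (hu : u ∈ bubbleFlag hd 0) (hv : ⟪toL2 (bubbleMap hd 1), toL2 v⟫_ℝ = 0) :
    ⟪toL2 u, toL2 v⟫_ℝ = 0 := by
  obtain ⟨p, hp, rfl⟩ := hu
  have hconst : p = coeff 0 p • 1 := by
    rw [smul_eq_C_mul, mul_one]
    exact totalDegree_eq_zero_iff_eq_C.1 (Nat.le_zero.1 ((mem_restrictTotalDegree ..).1 hp))
  rw [hconst, map_smul, map_smul, real_inner_smul_left, hv, mul_zero]

lemma bubbleMap_one_ne_zero (hd : 2 < d) : bubbleMap hd 1 ≠ 0 := fun hzero ↦ by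
  have huAT : uAT d 0 = 0 := by
    rw [← bubblePoly_one]
    exact congr_fun (congr_arg Subtype.val hzero) 0
  exact (bracketPow_pos _ _).ne' (uAT_eq_bracketPow (d := d) ▸ huAT)

lemma mem_bubbleFlag_one_iff (hd : 2 < d) {v : energySpace d}
    (hv : ⟪toL2 (bubbleMap hd 1), toL2 v⟫_ℝ = 0) :
    v ∈ bubbleFlag hd 1 ↔ ∃ l : Option (Fin d) → ℝ, v = ∑ a, l a • bubbleMap hd (X a) := by
  refine ⟨?_, ?_⟩
  · rintro ⟨p, hp, rfl⟩
    obtain ⟨c, l, rfl⟩ := mem_restrictTotalDegree_one_iff.1 hp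
    have hone : ⟪toL2 (bubbleMap hd 1), toL2 (bubbleMap hd 1)⟫_ℝ ≠ 0 :=
      inner_self_ne_zero.2 ((map_ne_zero_iff _ toL2_injective).2 (bubbleMap_one_ne_zero hd))
    have hc : c = 0 := by
      simpa only [map_add, map_sum, map_smul, inner_add_right, inner_sum, real_inner_smul_right,
        inner_toL2_bubbleMap_one_X, mul_zero, Finset.sum_const_zero, add_zero, mul_eq_zero, hone,
        or_false] using hv
    exact ⟨l, by simp only [hc, zero_smul, zero_add, map_sum, map_smul]⟩
  · rintro ⟨l, rfl⟩
    refine ⟨∑ a, l a • X a, mem_restrictTotalDegree_one_iff.2 ⟨0, l, ?_⟩, ?_⟩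
    · rw [zero_smul, zero_add]
    · simp only [map_sum, map_smul]

lemma bubblePoly_X_some (i : Fin d) : bubblePoly (X (some i)) = fun x ↦ 2 * atFi d i x := by
  ext x
  rw [bubblePoly, eval_X, invStereo, bracketPow_neg, bracketPow_two, atFi]
  ring

lemma bubblePoly_X_none : bubblePoly (X none) = atFlast d := by
  ext x
  have := one_add_norm_sq_pos x
  rw [bubblePoly, eval_X, invStereo, bracketPow_neg, bracketPow_two, atFlast]
  field_simp
  ring

lemma coe_sum_smul_bubbleMap_X (hd : 2 < d) (l : Option (Fin d) → ℝ) :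
    ((∑ a, l a • bubbleMap hd (X a) : energySpace d) : EuclideanSpace ℝ (Fin d) → ℝ) =
      fun x ↦ (∑ i, 2 * l (some i) * atFi d i x) + l none * atFlast d x := by
  ext x
  simp only [Fintype.sum_option, bubbleMap, LinearMap.coe_mk, AddHom.coe_mk, bubblePoly_X_some,
    bubblePoly_X_none, Submodule.coe_add, Submodule.coe_sum, Submodule.coe_smul, Pi.add_apply,
    Finset.sum_apply, Pi.smul_apply, smul_eq_mul]
  rw [add_comm]
  simp only [mul_left_comm, mul_assoc]

lemma exists_eq_sum_bubbleMap_X_iff (hd : 2 < d) (v : energySpace d) :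
    (∃ l : Option (Fin d) → ℝ, v = ∑ a, l a • bubbleMap hd (X a)) ↔
      ∃ (c : Fin d → ℝ) (c' : ℝ),
        v.1 =ᵐ[volume] fun x ↦ (∑ i, c i * atFi d i x) + c' * atFlast d x := by
  refine ⟨?_, ?_⟩
  · rintro ⟨l, rfl⟩
    exact ⟨fun i ↦ 2 * l (some i), l none, .of_eq (coe_sum_smul_bubbleMap_X hd l)⟩
  · rintro ⟨c, c', hv⟩
    let l : Option (Fin d) → ℝ := fun a ↦ a.elim c' fun i ↦ c i / 2
    have hl : (∑ a, l a • bubbleMap hd (X a)).1 =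
        fun x ↦ (∑ i, c i * atFi d i x) + c' * atFlast d x := by
      simp only [coe_sum_smul_bubbleMap_X, l, Option.elim_some, Option.elim_none,
        mul_div_cancel₀ _ (two_ne_zero (α := ℝ))]
    refine ⟨l, Subtype.ext ?_⟩
    exact Continuous.ae_eq_iff_eq volume (differentiable v).continuous
      (differentiable _).continuous |>.1 (hl ▸ hv)

lemma norm_sq_toL2 (v : energySpace d) :
    ‖toL2 v‖ ^ 2 = ∫ x, v.1 x ^ 2 / (1 + ‖x‖ ^ 2) ^ 2 := by
  simp only [← real_inner_self_eq_norm_sq, inner_toL2, bracketPow_neg_four_mul, sq (v.1 _)]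

lemma quadF_eq_zero_iff (v : energySpace d) :
    quadF d v.1 = 0 ↔ dirichletForm d v v = bubbleEigenvalue (d : ℝ) 1 * ‖toL2 v‖ ^ 2 := by
  rw [norm_sq_toL2, dirichletForm_apply, quadF, bubbleEigenvalue_one, sub_eq_zero]
  simp only [real_inner_self_eq_norm_sq]

lemma quadG_eq_zero_iff (hd : 2 < d) (v : energySpace d) :
    quadG d v.1 = 0 ↔
      (-greenForm hd) v v = -(bubbleEigenvalue (d : ℝ) 1)⁻¹ * ‖toL2 v‖ ^ 2 := by
  have hgreen : greenForm hd v v = ∫ x, v.1 x / (1 + ‖x‖ ^ 2) ^ 2 *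
      invLap d (fun y ↦ v.1 y / (1 + ‖y‖ ^ 2) ^ 2) x := by
    simp only [greenForm_apply, integral_bubbleMeasure, invLap, ← bracketPow_neg_four_mul,
      mul_assoc, mul_left_comm (bracketPow _ _)]
  rw [LinearMap.neg_apply, LinearMap.neg_apply, neg_mul, neg_inj, hgreen, norm_sq_toL2, quadG,
    bubbleEigenvalue_one, sub_eq_zero, one_div, eq_comm]

end FirstEigenspace

/-- the kernels of the quadratic forms `F` and `G` coincide and consist
of the linear combinations of `f_1, …, f_{d+1}`. -/
theorem ker_quadF_eq_ker_quadG (d : ℕ) (hd : 3 ≤ d)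
    (f : EuclideanSpace ℝ (Fin d) → ℝ) (hf : MemD12 d f)
    (hL2 : Integrable (fun x => f x ^ 2 / (1 + ‖x‖ ^ 2) ^ 2))
    (o0 : (∫ x, f x * uAT d x / (1 + ‖x‖ ^ 2) ^ 2) = 0) :
    (quadF d f = 0 ↔ quadG d f = 0) ∧
    (quadF d f = 0 ↔ ∃ (c : Fin d → ℝ) (c' : ℝ),
      f =ᵐ[volume] fun x => (∑ i, c i * atFi d i x) + c' * atFlast d x) := by
  set v : energySpace d := ⟨f, mem_energySpace_of_memD12 hd hf hL2⟩
  have hone : inner ℝ (energySpace.toL2 (bubbleMap hd 1)) (energySpace.toL2 v) = 0 := by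
    rw [← o0, real_inner_comm, energySpace.inner_toL2]
    simp only [bracketPow_neg_four_mul, ← bubblePoly_one]
    rfl
  have horth (u) (hu : u ∈ bubbleFlag hd 0) :
      inner ℝ (energySpace.toL2 u) (energySpace.toL2 v) = 0 :=
    inner_toL2_eq_zero_of_mem_bubbleFlag_zero hd hu hone
  have hF : quadF d f = 0 ↔ v ∈ bubbleFlag hd 1 :=
    (quadF_eq_zero_iff v).trans ((isEigenFlag_dirichletForm hd).apply_self_eq_iff horth)
  have hG : quadG d f = 0 ↔ v ∈ bubbleFlag hd 1 :=
    (quadG_eq_zero_iff hd v).trans ((isEigenFlag_neg_greenForm hd).apply_self_eq_iff horth)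
  exact ⟨hF.trans hG.symm, hF.trans ((mem_bubbleFlag_one_iff hd hone).trans
    (exists_eq_sum_bubbleMap_X_iff hd v))⟩
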